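/- Trading submerged width into outer width (Corollary to the Snake Lemma). There are absolute constants C > 0 and c > 0 such that the following holds for every λ > 2, every irrational θ ∈ (0,1) of bounded type with Siegel linearization data H, and all disjoint closed arcs I, J ⊆ ∂Z together with a complementary arc L of ∂Z between I and J with total combinatorial length |I| + |L| + |J| ≤ 1/2: if K := W°_L(I, J) − W⁺(I, J) ≥ C·log λ, then there exists a closed arc I′ ⊆ L with W⁺_λ(I′) ≥ c·K. -/

import Mathlib

noncomputable section

open MeasureTheory Set Metric Bornology
open scoped ENNReal NNReal

/-- A curve: continuous on `[0,1]` and continuously differentiable on `(0,1)`. -/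
def IsCurve (γ : ℝ → ℂ) : Prop :=
  ContinuousOn γ (Icc 0 1) ∧ ContDiffOn ℝ 1 γ (Ioo 0 1)

/-- The extremal width of a family of curves: the infimum of `∫ ρ² dA` over all Borel
measurable metrics `ρ : ℂ → [0,∞]` that give every curve of the family length at least `1`
(the infimum over the empty set being `∞`). -/
def extremalWidth (F : Set (ℝ → ℂ)) : ℝ≥0∞ :=
  ⨅ ρ ∈ {ρ : ℂ → ℝ≥0∞ | Measurable ρ ∧
      ∀ γ ∈ F, 1 ≤ ∫⁻ t in Ioo (0:ℝ) 1, ρ (γ t) * (‖deriv γ t‖₊ : ℝ≥0∞)},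
    ∫⁻ z, ρ z ^ 2

/-- The curves contained in `S`, starting in `X` and ending in `Y`. -/
def curveFamily (S X Y : Set ℂ) : Set (ℝ → ℂ) :=
  {γ : ℝ → ℂ | IsCurve γ ∧ (∀ t ∈ Icc (0:ℝ) 1, γ t ∈ S) ∧ γ 0 ∈ X ∧ γ 1 ∈ Y}

/-- The extremal width `W_S(X, Y)`. -/
def widthIn (S X Y : Set ℂ) : ℝ≥0∞ := extremalWidth (curveFamily S X Y)

/-- The point `e^{2πit}` of the unit circle. -/
def unitCirc (t : ℝ) : ℂ := Complex.exp (2 * Real.pi * Complex.I * t)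

/-- The Gauss map `x ↦ {1/x}`. -/
def gaussMap (x : ℝ) : ℝ := Int.fract x⁻¹

/-- `partialQuot θ k` is the partial quotient `a_{k+1}` of `θ = [0; a₁, a₂, …]`. -/
def partialQuot (θ : ℝ) (k : ℕ) : ℕ := (⌊(gaussMap^[k] θ)⁻¹⌋).toNat

/-- Numerators `pₙ` of the convergents: `p₀ = 0`, `p₁ = 1`, `pₙ₊₁ = aₙ₊₁ pₙ + pₙ₋₁`. -/
def convP (θ : ℝ) : ℕ → ℤ
  | 0 => 0
  | 1 => 1
  | n + 2 => (partialQuot θ (n + 1) : ℤ) * convP θ (n + 1) + convP θ n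

/-- Denominators `qₙ` of the convergents: `q₀ = 1`, `q₁ = a₁`, `qₙ₊₁ = aₙ₊₁ qₙ + qₙ₋₁`. -/
def convQ (θ : ℝ) : ℕ → ℤ
  | 0 => 1
  | 1 => (partialQuot θ 0 : ℤ)
  | n + 2 => (partialQuot θ (n + 1) : ℤ) * convQ θ (n + 1) + convQ θ n

/-- `θₙ = qₙ·θ − pₙ`. -/
def thetaN (θ : ℝ) (n : ℕ) : ℝ := (convQ θ n : ℝ) * θ - (convP θ n : ℝ)

/-- `ℓₙ = |θₙ|`. -/
def ellN (θ : ℝ) (n : ℕ) : ℝ := |thetaN θ n|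

/-- `θ` is an irrational number in `(0,1)` of bounded type. -/
def BoundedType (θ : ℝ) : Prop :=
  Irrational θ ∧ θ ∈ Ioo (0:ℝ) 1 ∧ ∃ M : ℕ, ∀ k, partialQuot θ k ≤ M

/-- The quadratic polynomial `f_θ(z) = e^{2πiθ} z + z²`. -/
def fTheta (θ : ℝ) (z : ℂ) : ℂ := Complex.exp (2 * Real.pi * Complex.I * θ) * z + z ^ 2

/-- The filled Julia set of `f_θ`. -/
def filledJulia (θ : ℝ) : Set ℂ :=
  {z | IsBounded (Set.range fun n : ℕ => (fTheta θ)^[n] z)}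

/-- The Siegel disk of `f_θ`: the connected component of the interior of the filled
Julia set containing `0`. -/
def siegelDisk (θ : ℝ) : Set ℂ := connectedComponentIn (interior (filledJulia θ)) 0

/-- The boundary `∂Z` of the Siegel disk. -/
def bdryZ (θ : ℝ) : Set ℂ := closure (siegelDisk θ) \ siegelDisk θ

/-- Siegel linearization data for `f_θ`: a continuous injective map from the closed unit
disk onto the closure of the Siegel disk, biholomorphic from the open disk onto the Siegel
disk, conjugating the rigid rotation to `f_θ`. -/
structure SiegelData (θ : ℝ) where
  H : ℂ → ℂ
  contOn : ContinuousOn H (closedBall 0 1)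
  injOn : Set.InjOn H (closedBall 0 1)
  holo : DifferentiableOn ℂ H (ball 0 1)
  image_ball : H '' ball 0 1 = siegelDisk θ
  image_closedBall : H '' closedBall 0 1 = closure (siegelDisk θ)
  map_zero : H 0 = 0
  semiconj : ∀ w ∈ closedBall (0:ℂ) 1,
      H (Complex.exp (2 * Real.pi * Complex.I * θ) * w) = fTheta θ (H w)

/-- The closed arc `H({e^{2πit} : t ∈ [u, v]})` of `∂Z`. -/
def arcOn (θ : ℝ) (S : SiegelData θ) (u v : ℝ) : Set ℂ := S.H '' (unitCirc '' Icc u v)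

/-- The outer width `W⁺(X, Y) = W_{ℂ∖Z}(X, Y)`. -/
def wPlus (θ : ℝ) (X Y : Set ℂ) : ℝ≥0∞ := widthIn (siegelDisk θ)ᶜ X Y

/-- The family `ℱ°_L(I, J)`: curves landing on the outer side of `∂Z` at `γ(0) ∈ I` and at
`γ(1) ∈ J`, whose interior avoids `I ∪ J ∪ (∂Z ∖ (I ∪ L ∪ J))`. -/
def circFam (θ : ℝ) (I L J : Set ℂ) : Set (ℝ → ℂ) :=
  {γ : ℝ → ℂ | IsCurve γ ∧ γ 0 ∈ I ∧ γ 1 ∈ J ∧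
      (∃ ε > 0, ∀ t ∈ Ioo (0:ℝ) ε, γ t ∉ siegelDisk θ) ∧
      (∃ ε > 0, ∀ t ∈ Ioo (1 - ε) (1:ℝ), γ t ∉ siegelDisk θ) ∧
      ∀ t ∈ Ioo (0:ℝ) 1, γ t ∉ I ∪ J ∪ (bdryZ θ \ (I ∪ L ∪ J))}

/-- `W°_L(I, J)`. -/
def circWidth (θ : ℝ) (I L J : Set ℂ) : ℝ≥0∞ := extremalWidth (circFam θ I L J)

/-- The harmonic sum `a ⊕ b = (a⁻¹ + b⁻¹)⁻¹`. -/
def hsum (x y : ℝ≥0∞) : ℝ≥0∞ := (x⁻¹ + y⁻¹)⁻¹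

/-- The closed arc of `∂Z` with combinatorial center `H(e^{2πic})` and combinatorial
length `2r`. -/
def cArc (θ : ℝ) (S : SiegelData θ) (c r : ℝ) : Set ℂ :=
  S.H '' (unitCirc '' Icc (c - r) (c + r))

/-- `W⁺_λ(X)` for the arc `X` of center `c` and length `2r`: the outer width between `X`
and the closure of `∂Z ∖ λ·X`, where `λ·X` is the concentric arc of length
`min(λ·|X|, 1)`. -/
def wPlusLam (θ : ℝ) (S : SiegelData θ) (lam c r : ℝ) : ℝ≥0∞ :=
  widthIn (siegelDisk θ)ᶜ (cArc θ S c r)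
    (closure (bdryZ θ \ cArc θ S c (min (lam * (2 * r)) 1 / 2)))


/-- length of `γ` on `(s,t)` in the metric `ρ` -/
def len (ρ : ℂ → ℝ≥0∞) (γ : ℝ → ℂ) (s t : ℝ) : ℝ≥0∞ :=
  ∫⁻ x in Ioo s t, ρ (γ x) * (‖deriv γ x‖₊ : ℝ≥0∞)

def area (ρ : ℂ → ℝ≥0∞) : ℝ≥0∞ := ∫⁻ z, ρ z ^ 2

def CrvOn (γ : ℝ → ℂ) (s t : ℝ) : Prop :=
  ContinuousOn γ (Icc s t) ∧ ContDiffOn ℝ 1 γ (Ioo s t)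

lemma CrvOn.mono {γ : ℝ → ℂ} {s t s' t' : ℝ} (h : CrvOn γ s t) (h1 : s ≤ s') (h2 : t' ≤ t) :
    CrvOn γ s' t' :=
  ⟨h.1.mono (Icc_subset_Icc h1 h2), h.2.mono (Ioo_subset_Ioo h1 h2)⟩

lemma len_mono_interval {ρ : ℂ → ℝ≥0∞} {γ : ℝ → ℂ} {s t s' t' : ℝ} (h1 : s ≤ s') (h2 : t' ≤ t) :
    len ρ γ s' t' ≤ len ρ γ s t :=
  lintegral_mono_set (Ioo_subset_Ioo h1 h2)

lemma len_mono {ρ ρ' : ℂ → ℝ≥0∞} {γ : ℝ → ℂ} {s t : ℝ} (h : ∀ z, ρ z ≤ ρ' z) :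
    len ρ γ s t ≤ len ρ' γ s t :=
  lintegral_mono fun x => by gcongr; exact h _

lemma CrvOn.hasDerivAt {γ : ℝ → ℂ} {s t x : ℝ} (h : CrvOn γ s t) (hx : x ∈ Ioo s t) :
    HasDerivAt γ (deriv γ x) x :=
  (((h.2.differentiableOn one_ne_zero) x hx).differentiableAt (isOpen_Ioo.mem_nhds hx)).hasDerivAt

lemma dist_le_len {γ : ℝ → ℂ} {s t : ℝ} (h : CrvOn γ s t) (hst : s ≤ t) :
    ENNReal.ofReal ‖γ t - γ s‖ ≤ ∫⁻ x in Ioo s t, (‖deriv γ x‖₊ : ℝ≥0∞) := by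
  by_cases hfin : (∫⁻ x in Ioo s t, (‖deriv γ x‖₊ : ℝ≥0∞)) = ⊤
  · rw [hfin]; exact le_top
  have hIntg : IntegrableOn (deriv γ) (Ioo s t) := by
    refine ⟨(measurable_deriv γ).aestronglyMeasurable, ?_⟩
    exact lt_top_iff_ne_top.2 hfin
  have hi : IntervalIntegrable (deriv γ) volume s t := by
    rw [intervalIntegrable_iff_integrableOn_Ioo_of_le hst]; exact hIntg
  have := intervalIntegral.integral_eq_sub_of_hasDerivAt_of_le hst h.1
    (fun x hx => h.hasDerivAt hx) hi
  rw [← this, intervalIntegral.integral_of_le hst, integral_Ioc_eq_integral_Ioo]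
  rw [ofReal_norm]
  exact enorm_integral_le_lintegral_enorm _

lemma len_const {κ : ℝ≥0∞} {ρ : ℂ → ℝ≥0∞} {γ : ℝ → ℂ} {s t d : ℝ} (h : CrvOn γ s t) (hst : s ≤ t)
    (hd : d ≤ ‖γ t - γ s‖) (hκ : ∀ x ∈ Ioo s t, κ ≤ ρ (γ x)) :
    κ * ENNReal.ofReal d ≤ len ρ γ s t := by
  calc κ * ENNReal.ofReal d ≤ κ * ∫⁻ x in Ioo s t, (‖deriv γ x‖₊ : ℝ≥0∞) := by
        gcongr; exact (ENNReal.ofReal_le_ofReal hd).trans (dist_le_len h hst)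
    _ ≤ ∫⁻ x in Ioo s t, κ * (‖deriv γ x‖₊ : ℝ≥0∞) := lintegral_const_mul_le _ _
    _ ≤ len ρ γ s t := by
        refine setLIntegral_mono' measurableSet_Ioo fun x hx => ?_
        gcongr; exact hκ x hx

/-- the LEN lemma -/
lemma len_ball {κ : ℝ≥0∞} {ρ : ℂ → ℝ≥0∞} {γ : ℝ → ℂ} {s t d τ τ' : ℝ} (h : CrvOn γ s t)
    (hτ : τ ∈ Icc s t) (hτ' : τ' ∈ Icc s t) (hd : d ≤ ‖γ τ' - γ τ‖)
    (hκ : ∀ x ∈ Ioo s t, ‖γ x - γ τ‖ < d → κ ≤ ρ (γ x)) :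
    κ * ENNReal.ofReal d ≤ len ρ γ s t := by
  rcases le_total τ τ' with hle | hle
  · have hc : ContinuousOn (fun x => ‖γ x - γ τ‖) (Icc τ τ') :=
      ((h.1.mono (Icc_subset_Icc hτ.1 hτ'.2)).sub continuousOn_const).norm
    have hK : IsCompact (Icc τ τ' ∩ (fun x => ‖γ x - γ τ‖) ⁻¹' Ici d) :=
      isCompact_Icc.of_isClosed_subset
        (hc.preimage_isClosed_of_isClosed isClosed_Icc isClosed_Ici) inter_subset_left
    obtain ⟨σ, ⟨hσ1, hσ2⟩, hσ3⟩ := hK.exists_isLeast ⟨τ', ⟨hle, le_rfl⟩, hd⟩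
    refine (len_const (h.mono hτ.1 (hσ1.2.trans hτ'.2)) hσ1.1 hσ2 fun x hx => ?_).trans
      (len_mono_interval hτ.1 (hσ1.2.trans hτ'.2))
    refine hκ x ⟨hτ.1.trans_lt hx.1, hx.2.trans_le (hσ1.2.trans hτ'.2)⟩ ?_
    by_contra hcon
    exact absurd (hσ3 ⟨⟨hx.1.le, hx.2.le.trans hσ1.2⟩, not_lt.1 hcon⟩) (not_le.2 hx.2)
  · have hc : ContinuousOn (fun x => ‖γ x - γ τ‖) (Icc τ' τ) :=
      ((h.1.mono (Icc_subset_Icc hτ'.1 hτ.2)).sub continuousOn_const).norm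
    have hK : IsCompact (Icc τ' τ ∩ (fun x => ‖γ x - γ τ‖) ⁻¹' Ici d) :=
      isCompact_Icc.of_isClosed_subset
        (hc.preimage_isClosed_of_isClosed isClosed_Icc isClosed_Ici) inter_subset_left
    obtain ⟨σ, ⟨hσ1, hσ2⟩, hσ3⟩ := hK.exists_isGreatest ⟨τ', ⟨le_rfl, hle⟩, hd⟩
    have hσ2' : d ≤ ‖γ τ - γ σ‖ := by rw [norm_sub_rev]; exact hσ2
    refine (len_const (h.mono (hτ'.1.trans hσ1.1) hτ.2) hσ1.2 hσ2' fun x hx => ?_).trans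
      (len_mono_interval (hτ'.1.trans hσ1.1) hτ.2)
    refine hκ x ⟨(hτ'.1.trans hσ1.1).trans_lt hx.1, hx.2.trans_le hτ.2⟩ ?_
    by_contra hcon
    exact absurd (hσ3 ⟨⟨hσ1.1.trans hx.1.le, hx.2.le⟩, not_lt.1 hcon⟩) (not_le.2 hx.1)

/-- affine reparametrization -/
lemma len_affine {ρ : ℂ → ℝ≥0∞} {γ : ℝ → ℂ} {p q a b : ℝ} (hq : q ≠ 0) (s t : ℝ)
    (him : (fun x => p + q * x) '' Ioo a b = Ioo s t) :
    len ρ (fun x => γ (p + q * x)) a b = len ρ γ s t := by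
  unfold len
  rw [← him, lintegral_image_eq_lintegral_abs_deriv_mul measurableSet_Ioo (f' := fun _ => q)]
  · refine lintegral_congr fun x => ?_
    have : deriv (fun x => γ (p + q * x)) x = q • deriv γ (p + q * x) := by
      have h1 := deriv_comp_mul_left q (fun y => γ (p + y)) x
      rw [h1, deriv_comp_const_add]
    rw [this, nnnorm_smul]
    have h2 : ENNReal.ofReal |q| = (‖q‖₊ : ℝ≥0∞) := by
      rw [← Real.norm_eq_abs, ofReal_norm]; rfl
    rw [h2]; push_cast; ring
  · intro x _
    have := ((hasDerivAt_id x).const_mul q).const_add p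
    simpa using this.hasDerivWithinAt
  · intro x _ y _ hxy
    have : q * x = q * y := by simpa using hxy
    exact mul_left_cancel₀ hq this

lemma isCurve_iff {γ : ℝ → ℂ} : IsCurve γ ↔ CrvOn γ 0 1 := Iff.rfl

lemma crvOn_affine {γ : ℝ → ℂ} {p q a b s t : ℝ} (h : CrvOn γ s t)
    (h1 : MapsTo (fun x => p + q * x) (Icc a b) (Icc s t))
    (h2 : MapsTo (fun x => p + q * x) (Ioo a b) (Ioo s t)) :
    CrvOn (fun x => γ (p + q * x)) a b := by
  refine ⟨h.1.comp (by fun_prop) h1, ?_⟩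
  exact ContDiffOn.comp (g := γ) (f := fun x => p + q * x) h.2 (by fun_prop) h2

/-- sub-curves: an admissible metric gives length at least one to every subcurve -/
lemma admissible_sub {ρ : ℂ → ℝ≥0∞} {S X Y : Set ℂ}
    (hρ : ∀ γ ∈ curveFamily S X Y, 1 ≤ len ρ γ 0 1) {γ : ℝ → ℂ} {s t : ℝ} (h : CrvOn γ s t)
    (hst : s < t) (hS : ∀ x ∈ Icc s t, γ x ∈ S) (hX : γ s ∈ X) (hY : γ t ∈ Y) :
    1 ≤ len ρ γ s t := by
  have hpos : 0 < t - s := sub_pos.2 hst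
  have him : (fun x => s + (t - s) * x) '' Ioo 0 1 = Ioo s t := by
    ext y; constructor
    · rintro ⟨x, hx, rfl⟩
      constructor <;> simp only <;> nlinarith [hx.1, hx.2]
    · intro hy
      refine ⟨(y - s) / (t - s), ⟨div_pos (sub_pos.2 hy.1) hpos, ?_⟩, ?_⟩
      · rw [div_lt_one hpos]; linarith [hy.2]
      · simp only; field_simp; ring
  have hm1 : MapsTo (fun x => s + (t - s) * x) (Icc 0 1) (Icc s t) := by
    intro x hx; constructor <;> simp only <;> nlinarith [hx.1, hx.2]
  have hm2 : MapsTo (fun x => s + (t - s) * x) (Ioo 0 1) (Ioo s t) := by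
    rw [← him]; exact mapsTo_image _ _
  rw [← len_affine hpos.ne' s t him]
  refine hρ _ ⟨crvOn_affine h hm1 hm2, fun x hx => hS _ (hm1 hx), ?_, ?_⟩
  · simpa using hX
  · simpa using hY

lemma admissible_rev {ρ : ℂ → ℝ≥0∞} {S X Y : Set ℂ}
    (hρ : ∀ γ ∈ curveFamily S X Y, 1 ≤ len ρ γ 0 1) {γ : ℝ → ℂ} {s t : ℝ} (h : CrvOn γ s t)
    (hst : s < t) (hS : ∀ x ∈ Icc s t, γ x ∈ S) (hX : γ t ∈ X) (hY : γ s ∈ Y) :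
    1 ≤ len ρ γ s t := by
  have hpos : 0 < t - s := sub_pos.2 hst
  have hne : s - t ≠ 0 := (sub_neg.2 hst).ne
  have him : (fun x => t + (s - t) * x) '' Ioo 0 1 = Ioo s t := by
    ext y; constructor
    · rintro ⟨x, hx, rfl⟩
      constructor <;> simp only <;> nlinarith [hx.1, hx.2]
    · intro hy
      refine ⟨(t - y) / (t - s), ⟨div_pos (sub_pos.2 hy.2) hpos, ?_⟩, ?_⟩
      · rw [div_lt_one hpos]; linarith [hy.1]
      · simp only; field_simp; ring
  have hm1 : MapsTo (fun x => t + (s - t) * x) (Icc 0 1) (Icc s t) := by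
    intro x hx; constructor <;> simp only <;> nlinarith [hx.1, hx.2]
  have hm2 : MapsTo (fun x => t + (s - t) * x) (Ioo 0 1) (Ioo s t) := by
    rw [← him]; exact mapsTo_image _ _
  rw [← len_affine hne s t him]
  refine hρ _ ⟨crvOn_affine h hm1 hm2, fun x hx => hS _ (hm1 hx), ?_, ?_⟩
  · simpa using hX
  · simpa using hY

lemma exists_metric_of_width_lt {F : Set (ℝ → ℂ)} {b : ℝ≥0∞} (h : extremalWidth F < b) :
    ∃ ρ : ℂ → ℝ≥0∞, Measurable ρ ∧ (∀ γ ∈ F, 1 ≤ len ρ γ 0 1) ∧ area ρ < b := by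
  unfold extremalWidth at h
  simp only [iInf_lt_iff] at h
  obtain ⟨ρ, ⟨h1, h2⟩, h3⟩ := h
  exact ⟨ρ, h1, h2, h3⟩

lemma width_le_area {F : Set (ℝ → ℂ)} {ρ : ℂ → ℝ≥0∞} (h1 : Measurable ρ)
    (h2 : ∀ γ ∈ F, 1 ≤ len ρ γ 0 1) : extremalWidth F ≤ area ρ :=
  iInf₂_le ρ ⟨h1, h2⟩

lemma width_mono {F G : Set (ℝ → ℂ)} (h : F ⊆ G) : extremalWidth F ≤ extremalWidth G :=
  le_iInf₂ fun ρ hρ => iInf₂_le ρ ⟨hρ.1, fun γ hγ => hρ.2 γ (h hγ)⟩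

lemma area_max_le {ρ ρ' : ℂ → ℝ≥0∞} (h : Measurable ρ) :
    area (fun z => max (ρ z) (ρ' z)) ≤ area ρ + area ρ' := by
  unfold area
  rw [← lintegral_add_left (h.pow_const 2)]
  refine lintegral_mono fun z => ?_
  rcases le_total (ρ z) (ρ' z) with h | h
  · simp only [max_eq_right h]; exact le_add_self
  · simp only [max_eq_left h]; exact le_self_add

lemma area_const_mul {ρ : ℂ → ℝ≥0∞} (h : Measurable ρ) (k : ℝ≥0∞) :
    area (fun z => k * ρ z) = k ^ 2 * area ρ := by
  unfold area
  simp_rw [mul_pow]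
  exact lintegral_const_mul _ (h.pow_const 2)

lemma ennreal_sq_add_le (a b : ℝ≥0∞) : (a + b) ^ 2 ≤ 2 * a ^ 2 + 2 * b ^ 2 := by
  by_cases ha : a = ⊤
  · simp [ha]
  by_cases hb : b = ⊤
  · simp [hb]
  lift a to ℝ≥0 using ha
  lift b to ℝ≥0 using hb
  norm_cast
  rw [← NNReal.coe_le_coe]
  push_cast
  nlinarith [sq_nonneg ((a : ℝ) - b)]

lemma width_union_le (F G : Set (ℝ → ℂ)) :
    extremalWidth (F ∪ G) ≤ extremalWidth F + extremalWidth G := by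
  by_cases hF : extremalWidth F = ⊤
  · simp [hF]
  by_cases hG : extremalWidth G = ⊤
  · simp [hG]
  refine ENNReal.le_of_forall_pos_le_add fun ε hε _ => ?_
  have hε2 : (ε / 2 : ℝ≥0∞) ≠ 0 := by
    simp [hε.ne']
  obtain ⟨ρ, h1, h2, h3⟩ := exists_metric_of_width_lt (ENNReal.lt_add_right hF hε2)
  obtain ⟨ρ', h1', h2', h3'⟩ := exists_metric_of_width_lt (ENNReal.lt_add_right hG hε2)
  calc extremalWidth (F ∪ G) ≤ area (fun z => max (ρ z) (ρ' z)) := by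
        refine width_le_area (h1.max h1') ?_
        rintro γ (hγ | hγ)
        · exact (h2 γ hγ).trans (len_mono fun z => le_max_left _ _)
        · exact (h2' γ hγ).trans (len_mono fun z => le_max_right _ _)
    _ ≤ area ρ + area ρ' := area_max_le h1
    _ ≤ (extremalWidth F + ε / 2) + (extremalWidth G + ε / 2) := add_le_add h3.le h3'.le
    _ = extremalWidth F + extremalWidth G + ε := by
        rw [add_add_add_comm, ENNReal.add_halves]

lemma measurable_ballMetric (κ : ℝ≥0∞) (x : ℂ) (r : ℝ) :
    Measurable ((ball x r).indicator fun _ => κ) :=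
  measurable_const.indicator measurableSet_ball

lemma area_indicator {A : Set ℂ} (hA : MeasurableSet A) (κ : ℝ≥0∞) :
    area (A.indicator fun _ => κ) = κ ^ 2 * volume A := by
  unfold area
  have : (fun z => (A.indicator (fun _ => κ) z) ^ 2) = A.indicator fun _ => κ ^ 2 := by
    ext z; by_cases h : z ∈ A <;> simp [h]
  rw [this, lintegral_indicator hA, setLIntegral_const]

structure JD (H : ℂ → ℂ) : Prop where
  contOn : ContinuousOn H (closedBall 0 1)
  injOn : Set.InjOn H (closedBall 0 1)
  holo : DifferentiableOn ℂ H (ball 0 1)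
  op : IsOpen (H '' ball 0 1)

def Zd (H : ℂ → ℂ) : Set ℂ := H '' ball 0 1
def bd (H : ℂ → ℂ) : Set ℂ := H '' sphere 0 1
def pt (H : ℂ → ℂ) (α : ℝ) : ℂ := H (unitCirc α)
def arc (H : ℂ → ℂ) (u v : ℝ) : Set ℂ := pt H '' Icc u v
def Ginv (H : ℂ → ℂ) : ℂ → ℂ := Function.invFunOn H (closedBall 0 1)

lemma norm_unitCirc (α : ℝ) : ‖unitCirc α‖ = 1 := by
  unfold unitCirc
  rw [Complex.norm_exp]
  simp

lemma unitCirc_mem (α : ℝ) : unitCirc α ∈ sphere (0:ℂ) 1 := by simp [norm_unitCirc]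

lemma unitCirc_memc (α : ℝ) : unitCirc α ∈ closedBall (0:ℂ) 1 :=
  sphere_subset_closedBall (unitCirc_mem α)

lemma continuous_unitCirc : Continuous unitCirc := by
  unfold unitCirc; fun_prop

lemma norm_unitCirc_sub (α β : ℝ) :
    ‖unitCirc α - unitCirc β‖ = 2 * |Real.sin (Real.pi * (α - β))| := by
  have h : unitCirc α - unitCirc β =
      (2 * Complex.I) * Complex.exp (((Real.pi * (α + β) : ℝ) : ℂ) * Complex.I) *
        ((Real.sin (Real.pi * (α - β)) : ℝ) : ℂ) := by
    unfold unitCirc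
    push_cast
    rw [Complex.sin]
    have h1 : (2 * (Real.pi:ℂ) * Complex.I * α) = (Real.pi * (α + β)) * Complex.I
      + (Real.pi * (α - β)) * Complex.I := by ring
    have h2 : (2 * (Real.pi:ℂ) * Complex.I * β) = (Real.pi * (α + β)) * Complex.I
      + -(Real.pi * (α - β)) * Complex.I := by ring
    rw [h1, h2, Complex.exp_add, Complex.exp_add]
    linear_combination (-Complex.exp (Real.pi * (α + β) * Complex.I) *
      (Complex.exp (-(Real.pi * (α - β)) * Complex.I) - Complex.exp ((Real.pi * (α - β)) * Complex.I)))
       * Complex.I_sq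
  rw [h, norm_mul, norm_mul, Complex.norm_exp_ofReal_mul_I, Complex.norm_real, Real.norm_eq_abs]
  simp

lemma norm_unitCirc_sub_le (α β : ℝ) :
    ‖unitCirc α - unitCirc β‖ ≤ 2 * Real.pi * |α - β| := by
  rw [norm_unitCirc_sub]
  have : |Real.sin (Real.pi * (α - β))| ≤ |Real.pi * (α - β)| := Real.abs_sin_le_abs
  rw [abs_mul, abs_of_pos Real.pi_pos] at this
  nlinarith

lemma le_norm_unitCirc_sub {α β : ℝ} (h : |α - β| ≤ 1 / 2) :
    4 * |α - β| ≤ ‖unitCirc α - unitCirc β‖ := by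
  rw [norm_unitCirc_sub]
  have key : ∀ x : ℝ, 0 ≤ x → x ≤ 1 / 2 → 2 * x ≤ Real.sin (Real.pi * x) := by
    intro x h0 h1
    have := Real.mul_le_sin (x := Real.pi * x) (by positivity) (by nlinarith [Real.pi_pos])
    have e : 2 / Real.pi * (Real.pi * x) = 2 * x := by
      field_simp
    linarith
  have e2 : |Real.sin (Real.pi * (α - β))| = |Real.sin (Real.pi * |α - β|)| := by
    rcases abs_cases (α - β) with ⟨h, _⟩ | ⟨h, _⟩ <;> rw [h]
    rw [mul_neg, Real.sin_neg, abs_neg]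
  rw [e2]
  have := key _ (abs_nonneg _) h
  have h3 := le_abs_self (Real.sin (Real.pi * |α - β|))
  linarith

lemma unitCirc_inj {α β : ℝ} (h : |α - β| < 1) (he : unitCirc α = unitCirc β) : α = β := by
  have h0 : ‖unitCirc α - unitCirc β‖ = 0 := by rw [he]; simp
  rw [norm_unitCirc_sub] at h0
  have h1 : Real.sin (Real.pi * (α - β)) = 0 := by
    have : |Real.sin (Real.pi * (α - β))| = 0 := by linarith
    exact abs_eq_zero.1 this
  rw [Real.sin_eq_zero_iff_of_lt_of_lt] at h1
  · have := (mul_eq_zero.1 h1).resolve_left Real.pi_ne_zero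
    linarith
  · nlinarith [(abs_lt.1 h).1, Real.pi_pos]
  · nlinarith [(abs_lt.1 h).2, Real.pi_pos]

lemma exists_unitCirc {w : ℂ} (hw : w ∈ sphere (0:ℂ) 1) (a : ℝ) :
    ∃ α ∈ Ico a (a + 1), unitCirc α = w := by
  have hn : ‖w‖ = 1 := by simpa using hw
  have h1 : ∃ β : ℝ, unitCirc β = w := by
    refine ⟨w.arg / (2 * Real.pi), ?_⟩
    unfold unitCirc
    have := Complex.norm_mul_exp_arg_mul_I w
    rw [hn] at this
    refine Eq.trans ?_ this
    have hp : (Real.pi : ℂ) ≠ 0 := by exact_mod_cast Real.pi_ne_zero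
    push_cast
    rw [one_mul]; congr 1
    field_simp
  obtain ⟨β, hβ⟩ := h1
  refine ⟨a + Int.fract (β - a), ⟨by linarith [Int.fract_nonneg (β - a)], by
    linarith [Int.fract_lt_one (β - a)]⟩, ?_⟩
  rw [← hβ]
  unfold unitCirc
  rw [Complex.exp_eq_exp_iff_exists_int]
  refine ⟨-⌊β - a⌋, ?_⟩
  have : Int.fract (β - a) = β - a - ⌊β - a⌋ := rfl
  rw [this]; push_cast; ring

namespace JD
variable {H : ℂ → ℂ}

lemma isCompact_closed (h : JD H) : IsCompact (H '' closedBall 0 1) :=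
  (isCompact_closedBall 0 1).image_of_continuousOn h.contOn

lemma isCompact_bd (h : JD H) : IsCompact (bd H) :=
  (isCompact_sphere 0 1).image_of_continuousOn (h.contOn.mono sphere_subset_closedBall)

lemma closed_eq : H '' closedBall 0 1 = Zd H ∪ bd H := by
  rw [Zd, bd, ← image_union, ball_union_sphere]

lemma bd_notMem (h : JD H) {z : ℂ} (hz : z ∈ bd H) : z ∉ Zd H := by
  obtain ⟨w, hw, rfl⟩ := hz
  rintro ⟨w', hw', he⟩
  have := h.injOn (ball_subset_closedBall hw') (sphere_subset_closedBall hw) he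
  subst this
  simp at hw hw'; linarith

lemma isOpen_Zd (h : JD H) : IsOpen (Zd H) := h.op

lemma pt_mem (α : ℝ) : pt H α ∈ bd H := ⟨_, unitCirc_mem α, rfl⟩

lemma continuous_pt (h : JD H) : Continuous (pt H) :=
  h.contOn.comp_continuous continuous_unitCirc unitCirc_memc

lemma pt_inj (h : JD H) {α β : ℝ} (hlt : |α - β| < 1) (he : pt H α = pt H β) : α = β :=
  unitCirc_inj hlt (h.injOn (unitCirc_memc _) (unitCirc_memc _) he)

lemma exists_pt {z : ℂ} (hz : z ∈ bd H) (a : ℝ) : ∃ α ∈ Ico a (a + 1), pt H α = z := by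
  obtain ⟨w, hw, rfl⟩ := hz
  obtain ⟨α, h1, h2⟩ := exists_unitCirc hw a
  exact ⟨α, h1, by rw [pt, h2]⟩

lemma isCompact_arc (h : JD H) (u v : ℝ) : IsCompact (arc H u v) :=
  isCompact_Icc.image h.continuous_pt

lemma arc_subset (u v : ℝ) : arc H u v ⊆ bd H := by
  rintro _ ⟨α, _, rfl⟩; exact pt_mem α

lemma mem_arc_iff (h : JD H) {α u v : ℝ} (hu : v < α + 1) (hv : α < u + 1) :
    pt H α ∈ arc H u v ↔ α ∈ Icc u v := by
  refine ⟨?_, fun hx => ⟨α, hx, rfl⟩⟩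
  rintro ⟨β, hβ, he⟩
  have : β = α := h.pt_inj (abs_lt.2 ⟨by linarith [hβ.1], by linarith [hβ.2]⟩) he
  rwa [← this]

lemma disjoint_arc (h : JD H) {u v u' v' : ℝ} (h1 : v < u') (h2 : v' < u + 1) :
    Disjoint (arc H u v) (arc H u' v') := by
  rw [Set.disjoint_left]
  rintro _ ⟨α, hα, rfl⟩ ⟨β, hβ, he⟩
  have : β = α := h.pt_inj (abs_lt.2 ⟨by linarith [hβ.1, hα.2], by linarith [hβ.2, hα.1]⟩) he
  linarith [hβ.1, hα.2]

lemma dichotomy (h : JD H) {γ : ℝ → ℂ} {s t : ℝ} (hc : ContinuousOn γ (Icc s t))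
    (hno : ∀ x ∈ Ioo s t, γ x ∉ bd H) :
    (∀ x ∈ Ioo s t, γ x ∈ Zd H) ∨ (∀ x ∈ Ioo s t, γ x ∉ Zd H) := by
  have hp : IsPreconnected (γ '' Ioo s t) :=
    isPreconnected_Ioo.image _ (hc.mono Ioo_subset_Icc_self)
  have ho : IsOpen (H '' closedBall 0 1)ᶜ := h.isCompact_closed.isClosed.isOpen_compl
  have := hp.subset_or_subset h.isOpen_Zd ho (by
      rw [closed_eq]
      exact disjoint_left.2 fun x hx hx2 => hx2 (Or.inl hx)) (by
      rintro _ ⟨x, hx, rfl⟩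
      rw [closed_eq]
      by_cases hz : γ x ∈ Zd H
      · exact Or.inl hz
      · right; rintro (hh | hh)
        · exact hz hh
        · exact hno x hx hh)
  rcases this with h1 | h1
  · exact Or.inl fun x hx => h1 ⟨x, hx, rfl⟩
  · right; intro x hx hz
    have := h1 ⟨x, hx, rfl⟩
    rw [closed_eq] at this
    exact this (Or.inl hz)

lemma Ginv_left (h : JD H) {w : ℂ} (hw : w ∈ closedBall (0:ℂ) 1) : Ginv H (H w) = w :=
  h.injOn.leftInvOn_invFunOn hw

lemma Ginv_mem {z : ℂ} (hz : z ∈ H '' closedBall 0 1) : Ginv H z ∈ closedBall (0:ℂ) 1 :=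
  Function.invFunOn_mem hz

lemma Ginv_right {z : ℂ} (hz : z ∈ H '' closedBall 0 1) : H (Ginv H z) = z :=
  Function.invFunOn_eq hz

lemma Ginv_contOn (h : JD H) : ContinuousOn (Ginv H) (H '' closedBall 0 1) := by
  rw [continuousOn_iff_isClosed]
  intro t ht
  refine ⟨H '' (closedBall 0 1 ∩ t), ?_, ?_⟩
  · exact (((isCompact_closedBall 0 1).inter_right ht).image_of_continuousOn
      (h.contOn.mono inter_subset_left)).isClosed
  · ext z; constructor
    · rintro ⟨h1, h2⟩
      exact ⟨⟨Ginv H z, ⟨Ginv_mem h2, h1⟩, Ginv_right h2⟩, h2⟩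
    · rintro ⟨⟨w, ⟨hw1, hw2⟩, rfl⟩, h2⟩
      refine ⟨?_, h2⟩
      rw [mem_preimage, h.Ginv_left hw1]; exact hw2

lemma Ginv_mem_ball (h : JD H) {z : ℂ} (hz : z ∈ Zd H) : Ginv H z ∈ ball (0:ℂ) 1 := by
  obtain ⟨w, hw, rfl⟩ := hz
  rw [h.Ginv_left (ball_subset_closedBall hw)]; exact hw

lemma Ginv_contAt (h : JD H) {z : ℂ} (hz : z ∈ Zd H) : ContinuousAt (Ginv H) z := by
  refine h.Ginv_contOn.continuousAt ?_
  rw [closed_eq]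
  exact Filter.mem_of_superset (h.isOpen_Zd.mem_nhds hz) subset_union_left

lemma holoAt (h : JD H) {w : ℂ} (hw : w ∈ ball (0:ℂ) 1) : HasDerivAt H (deriv H w) w :=
  (h.holo.differentiableAt (isOpen_ball.mem_nhds hw)).hasDerivAt

lemma Ginv_deriv_of_ne (h : JD H) {w : ℂ} (hw : w ∈ ball (0:ℂ) 1) (hne : deriv H w ≠ 0) :
    HasDerivAt (Ginv H) (deriv H w)⁻¹ (H w) := by
  have hz : H w ∈ Zd H := ⟨w, hw, rfl⟩
  have e : Ginv H (H w) = w := h.Ginv_left (ball_subset_closedBall hw)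
  have hd : HasDerivAt H (deriv H w) (Ginv H (H w)) := by rw [e]; exact h.holoAt hw
  refine HasDerivAt.of_local_left_inverse (h.Ginv_contAt hz) hd hne ?_
  filter_upwards [h.isOpen_Zd.mem_nhds hz] with z hz'
  exact Ginv_right (by rw [closed_eq]; exact Or.inl hz')

lemma deriv_ne (h : JD H) {w : ℂ} (hw : w ∈ ball (0:ℂ) 1) : deriv H w ≠ 0 := by
  have han : AnalyticOnNhd ℂ (deriv H) (ball 0 1) :=
    (h.holo.analyticOnNhd isOpen_ball).deriv
  have hz : H w ∈ Zd H := ⟨w, hw, rfl⟩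
  rcases (han w hw).eventually_eq_zero_or_eventually_ne_zero with h0 | h0
  · exfalso
    have hall : EqOn (deriv H) 0 (ball 0 1) :=
      han.eqOn_zero_of_preconnected_of_eventuallyEq_zero (convex_ball 0 1).isPreconnected hw h0
    have h2 : ∀ x ∈ ball (0:ℂ) 1, deriv H x = 0 := fun x hx => hall hx
    have h3 := isOpen_ball.is_const_of_deriv_eq_zero (convex_ball (0:ℂ) 1).isPreconnected h.holo
      (fun x hx => hall hx) (x := 0) (y := 1/2) (by simp) (by simp; norm_num)
    have := h.injOn (by simp) (by simp; norm_num) h3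
    norm_num at this
  · have hev : ∀ᶠ z in nhdsWithin (H w) {H w}ᶜ, DifferentiableAt ℂ (Ginv H) z := by
      have hG := (h.Ginv_contAt hz).tendsto
      rw [h.Ginv_left (ball_subset_closedBall hw)] at hG
      rw [eventually_nhdsWithin_iff] at h0 ⊢
      filter_upwards [hG.eventually h0, h.isOpen_Zd.mem_nhds hz] with z h1 h2 h3
      have hzc : z ∈ H '' closedBall 0 1 := by rw [closed_eq]; exact Or.inl h2
      have hne : Ginv H z ≠ w := by
        intro hc; apply h3; rw [mem_singleton_iff, ← hc, Ginv_right hzc]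
      have := h.Ginv_deriv_of_ne (h.Ginv_mem_ball h2) (h1 hne)
      rw [Ginv_right hzc] at this
      exact this.differentiableAt
    have hA := Complex.analyticAt_of_differentiable_on_punctured_nhds_of_continuousAt hev
      (h.Ginv_contAt hz)
    have hd := hA.differentiableAt.hasDerivAt.comp w (h.holoAt hw)
    have hid : HasDerivAt (Ginv H ∘ H) 1 w := by
      refine (hasDerivAt_id w).congr_of_eventuallyEq ?_
      filter_upwards [isOpen_ball.mem_nhds hw] with x hx
      simp [h.Ginv_left (ball_subset_closedBall hx)]
    have := hd.unique hid
    intro hc; rw [hc] at this; simp at this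

lemma Ginv_hasDerivAt (h : JD H) {z : ℂ} (hz : z ∈ Zd H) :
    HasDerivAt (Ginv H) (deriv (Ginv H) z) z := by
  obtain ⟨w, hw, rfl⟩ := hz
  exact (h.Ginv_deriv_of_ne hw (h.deriv_ne hw)).differentiableAt.hasDerivAt

lemma deriv_Ginv (h : JD H) {w : ℂ} (hw : w ∈ ball (0:ℂ) 1) :
    deriv (Ginv H) (H w) = (deriv H w)⁻¹ :=
  (h.Ginv_deriv_of_ne hw (h.deriv_ne hw)).deriv

end JD

lemma det_cmul (c : ℂ) : (c • (1 : ℂ →L[ℝ] ℂ)).det = ‖c‖ ^ 2 := by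
  have h1 : ((c • (1 : ℂ →L[ℝ] ℂ) : ℂ →L[ℝ] ℂ) : ℂ →ₗ[ℝ] ℂ) = LinearMap.mulLeft ℝ c := by
    ext <;> simp
  rw [ContinuousLinearMap.det, h1]
  have := Algebra.norm_apply ℝ c
  rw [Algebra.norm_complex_eq] at this
  rw [show LinearMap.mulLeft ℝ c = (Algebra.lmul ℝ ℂ) c from rfl, ← this]
  simp [Complex.normSq_eq_norm_sq]

lemma JD.crvOn_Ginv {H : ℂ → ℂ} (h : JD H) {γ : ℝ → ℂ} {s t : ℝ} (hγ : CrvOn γ s t)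
    (hZ : ∀ x ∈ Ioo s t, γ x ∈ Zd H) (hcl : ∀ x ∈ Icc s t, γ x ∈ H '' closedBall 0 1) :
    CrvOn (fun x => Ginv H (γ x)) s t := by
  refine ⟨h.Ginv_contOn.comp hγ.1 hcl, ?_⟩
  have h1 : DifferentiableOn ℂ (Ginv H) (Zd H) := fun z hz =>
    (h.Ginv_hasDerivAt hz).differentiableAt.differentiableWithinAt
  have h2 : ContDiffOn ℝ 1 (Ginv H) (Zd H) := (h1.contDiffOn h.isOpen_Zd).restrict_scalars ℝ
  exact h2.comp hγ.2 hZ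

lemma JD.inner_metric {H : ℂ → ℂ} (h : JD H) (p : ℂ) {R d : ℝ} (hd : 0 < d) (hR : 0 ≤ R) :
    ∃ ρ : ℂ → ℝ≥0∞, Measurable ρ ∧ area ρ ≤ ENNReal.ofReal (Real.pi * R ^ 2 / d ^ 2) ∧
      ∀ (γ : ℝ → ℂ) (s t τ τ' : ℝ), CrvOn γ s t → (∀ x ∈ Ioo s t, γ x ∈ Zd H) →
        (∀ x ∈ Icc s t, γ x ∈ H '' closedBall 0 1) → τ ∈ Icc s t → τ' ∈ Icc s t →
        d ≤ ‖Ginv H (γ τ') - Ginv H (γ τ)‖ → ‖Ginv H (γ τ) - p‖ + d ≤ R → 1 ≤ len ρ γ s t := by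
  set U : Set ℂ := Zd H ∩ Ginv H ⁻¹' ball p R with hU
  have hUo : IsOpen U := by
    refine ContinuousOn.isOpen_inter_preimage (fun z hz => (h.Ginv_contAt hz).continuousWithinAt)
      h.isOpen_Zd isOpen_ball
  refine ⟨U.indicator fun z => ENNReal.ofReal (1 / d) * ‖deriv (Ginv H) z‖₊, ?_, ?_, ?_⟩
  · refine Measurable.indicator ?_ hUo.measurableSet
    exact measurable_const.mul (measurable_deriv _).nnnorm.coe_nnreal_ennreal
  · have e1 : area (U.indicator fun z => ENNReal.ofReal (1 / d) * ‖deriv (Ginv H) z‖₊)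
        = ENNReal.ofReal (1 / d) ^ 2 * ∫⁻ z in U, (‖deriv (Ginv H) z‖₊ : ℝ≥0∞) ^ 2 := by
      unfold area
      have : (fun z => (U.indicator (fun z => ENNReal.ofReal (1 / d) *
          (‖deriv (Ginv H) z‖₊ : ℝ≥0∞)) z) ^ 2)
          = U.indicator fun z => ENNReal.ofReal (1 / d) ^ 2 * (‖deriv (Ginv H) z‖₊ : ℝ≥0∞) ^ 2 := by
        ext z; by_cases hz : z ∈ U
        · simp [hz, mul_pow]
        · simp [hz]
      rw [this, lintegral_indicator hUo.measurableSet, lintegral_const_mul]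
      exact (measurable_deriv _).nnnorm.coe_nnreal_ennreal.pow_const 2
    have e2 : ∫⁻ z in U, (‖deriv (Ginv H) z‖₊ : ℝ≥0∞) ^ 2 = volume (Ginv H '' U) := by
      have := lintegral_image_eq_lintegral_abs_det_fderiv_mul volume hUo.measurableSet
        (f := Ginv H) (f' := fun z => deriv (Ginv H) z • (1 : ℂ →L[ℝ] ℂ))
        (fun z hz => (h.Ginv_hasDerivAt hz.1).complexToReal_fderiv.hasFDerivWithinAt)
        (fun z hz z' hz' he => by
          have a1 : H (Ginv H z) = z :=
            JD.Ginv_right (by rw [JD.closed_eq]; exact Or.inl hz.1)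
          have a2 : H (Ginv H z') = z' :=
            JD.Ginv_right (by rw [JD.closed_eq]; exact Or.inl hz'.1)
          rw [← a1, he, a2]) (fun _ => 1)
      rw [lintegral_const, one_mul, Measure.restrict_apply MeasurableSet.univ, univ_inter] at this
      rw [this]
      refine lintegral_congr fun z => ?_
      rw [det_cmul, mul_one, abs_of_nonneg (by positivity), ENNReal.ofReal_pow (norm_nonneg _),
        ofReal_norm]; rfl
    rw [e1, e2]
    have e3 : volume (Ginv H '' U) ≤ ENNReal.ofReal (Real.pi * R ^ 2) := by
      refine (measure_mono (t := ball p R) ?_).trans ?_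
      · rintro _ ⟨z, hz, rfl⟩; exact hz.2
      · rw [Complex.volume_ball, mul_comm, ENNReal.ofReal_mul Real.pi_pos.le,
          ENNReal.ofReal_pow hR]
        gcongr
        rw [ENNReal.le_ofReal_iff_toReal_le (by simp) Real.pi_pos.le]; simp
    calc _ ≤ ENNReal.ofReal (1 / d) ^ 2 * ENNReal.ofReal (Real.pi * R ^ 2) := by gcongr
      _ = _ := by
        rw [← ENNReal.ofReal_pow (by positivity), ← ENNReal.ofReal_mul (by positivity)]
        congr 1; field_simp
  · intro γ s t τ τ' hγ hZ hcl hτ hτ' hdd hp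
    have hw := h.crvOn_Ginv hγ hZ hcl
    have key := len_ball (κ := ENNReal.ofReal (1 / d))
      (ρ := (ball p R).indicator fun _ => ENNReal.ofReal (1 / d)) hw hτ hτ' hdd (by
        intro x hx hlt
        have : Ginv H (γ x) ∈ ball p R := by
          rw [mem_ball, dist_eq_norm]
          calc ‖Ginv H (γ x) - p‖ = ‖(Ginv H (γ x) - Ginv H (γ τ)) + (Ginv H (γ τ) - p)‖ := by
                congr 1; ring
            _ ≤ _ := norm_add_le _ _
            _ < R := by linarith
        simp [this])
    rw [← ENNReal.ofReal_mul (by positivity), one_div_mul_cancel hd.ne', ENNReal.ofReal_one] at key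
    refine key.trans ?_
    unfold len
    refine setLIntegral_mono' measurableSet_Ioo fun x hx => ?_
    have hder : deriv (fun x => Ginv H (γ x)) x = deriv (Ginv H) (γ x) * deriv γ x :=
      ((h.Ginv_hasDerivAt (hZ x hx)).comp_of_eq x (hγ.hasDerivAt hx) rfl).deriv
    by_cases hb : Ginv H (γ x) ∈ ball p R
    · have hxU : γ x ∈ U := ⟨hZ x hx, hb⟩
      rw [indicator_of_mem hb, indicator_of_mem hxU, hder, nnnorm_mul]
      push_cast; rw [mul_assoc]
    · rw [indicator_of_notMem hb]; simp

lemma exists_log {X : Type*} [TopologicalSpace X] [SimplyConnectedSpace X]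
    [LocallyPathConnectedSpace X] {f : X → ℂ} (hf : Continuous f) (h0 : ∀ x, f x ≠ 0) :
    ∃ L : X → ℂ, Continuous L ∧ ∀ x, Complex.exp (L x) = f x := by
  have x₀ : X := Classical.arbitrary X
  rcases Complex.isCoveringMapOn_exp.existsUnique_continuousMap_lifts
    (⟨f, hf⟩ : C(X, ℂ)) (a₀ := x₀) (Complex.exp_log (h0 x₀)) (fun x => h0 x) with ⟨L, ⟨-, hL⟩, -⟩
  exact ⟨L, map_continuous L, fun x => congrFun hL x⟩

lemma log_unique {L1 L2 : ℝ → ℂ} (h1 : Continuous L1) (h2 : Continuous L2)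
    (he : ∀ x, Complex.exp (L1 x) = Complex.exp (L2 x)) : L1 1 - L1 0 = L2 1 - L2 0 := by
  have hIntg : ∀ x, ∃ n : ℤ, L1 x = L2 x + n * (2 * Real.pi * Complex.I) := fun x =>
    Complex.exp_eq_exp_iff_exists_int.1 (he x)
  choose n hn using hIntg
  have hp : (2 * Real.pi * Complex.I : ℂ) ≠ 0 := Complex.two_pi_I_ne_zero
  set f : ℝ → ℝ := fun x => ((L1 x - L2 x) / (2 * Real.pi * Complex.I)).re with hf
  have hfn : ∀ x, f x = n x := by
    intro x
    have : (L1 x - L2 x) / (2 * Real.pi * Complex.I) = ((n x : ℝ) : ℂ) := by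
      rw [div_eq_iff hp, hn x]; push_cast; ring
    simp only [hf, this, Complex.ofReal_re]
  have hfc : Continuous f := by
    simp only [hf]
    exact Complex.continuous_re.comp ((h1.sub h2).div_const _)
  have h01 : n 0 = n 1 := by
    by_contra hne
    have key : ∀ m : ℤ, ((m:ℝ) + 1 / 2) ∉ range f := by
      rintro m ⟨x, hx⟩
      rw [hfn x] at hx
      have : (2 * n x : ℝ) = 2 * m + 1 := by linarith
      have h3 : 2 * n x = 2 * m + 1 := by exact_mod_cast this
      omega
    have hpc : (range f).OrdConnected := (isPreconnected_range hfc).ordConnected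
    rcases lt_or_gt_of_ne hne with hlt | hlt
    · refine key (n 0) (hpc.out ⟨0, hfn 0⟩ ⟨1, hfn 1⟩ ⟨by linarith, ?_⟩)
      have : ((n 0 + 1 : ℤ) : ℝ) ≤ n 1 := by exact_mod_cast hlt
      push_cast at this; linarith
    · refine key (n 1) (hpc.out ⟨1, hfn 1⟩ ⟨0, hfn 0⟩ ⟨by linarith, ?_⟩)
      have : ((n 1 + 1 : ℤ) : ℝ) ≤ n 0 := by exact_mod_cast hlt
      push_cast at this; linarith
  rw [hn 0, hn 1, h01]; ring

open Classical in
/-- increment of the logarithm along a nonvanishing path -/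
def inc (f : ℝ → ℂ) : ℂ :=
  if h : ∃ L : ℝ → ℂ, Continuous L ∧ ∀ x, Complex.exp (L x) = f x then
    h.choose 1 - h.choose 0 else 0

lemma inc_eq {f L : ℝ → ℂ} (hL : Continuous L) (he : ∀ x, Complex.exp (L x) = f x) :
    inc f = L 1 - L 0 := by
  have h : ∃ L : ℝ → ℂ, Continuous L ∧ ∀ x, Complex.exp (L x) = f x := ⟨L, hL, he⟩
  rw [inc, dif_pos h]
  exact log_unique h.choose_spec.1 hL fun x => by rw [h.choose_spec.2 x, he x]

lemma inc_mul {f g : ℝ → ℂ} (hf : Continuous f) (hg : Continuous g) (hf0 : ∀ x, f x ≠ 0)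
    (hg0 : ∀ x, g x ≠ 0) : inc (fun x => f x * g x) = inc f + inc g := by
  obtain ⟨L, hL, hLe⟩ := exists_log hf hf0
  obtain ⟨M, hM, hMe⟩ := exists_log hg hg0
  rw [inc_eq hL hLe, inc_eq hM hMe,
    inc_eq (L := fun x => L x + M x) (hL.add hM)
      (fun x => by rw [Complex.exp_add, hLe, hMe])]
  ring

lemma inc_const {c : ℂ} (hc : c ≠ 0) : inc (fun _ => c) = 0 := by
  rw [inc_eq (L := fun _ => Complex.log c) continuous_const (fun _ => Complex.exp_log hc)]
  simp

lemma inc_square {F : ℝ × ℝ → ℂ} (hF : Continuous F) (h0 : ∀ x, F x ≠ 0) :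
    inc (fun s => F (s, 0)) + inc (fun t => F (1, t)) =
      inc (fun t => F (0, t)) + inc (fun s => F (s, 1)) := by
  obtain ⟨L, hL, hLe⟩ := exists_log hF h0
  rw [inc_eq (L := fun s => L (s, 0)) (by fun_prop) (fun x => hLe _),
    inc_eq (L := fun s => L (s, 1)) (by fun_prop) (fun x => hLe _),
    inc_eq (L := fun t => L (1, t)) (by fun_prop) (fun x => hLe _),
    inc_eq (L := fun t => L (0, t)) (by fun_prop) (fun x => hLe _)]
  ring

def clamp (x : ℝ) : ℝ := max 0 (min 1 x)
lemma continuous_clamp : Continuous clamp := by unfold clamp; fun_prop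
lemma clamp_mem (x : ℝ) : clamp x ∈ Icc (0:ℝ) 1 :=
  ⟨le_max_left _ _, max_le zero_le_one (min_le_left _ _)⟩
lemma clamp_zero : clamp 0 = 0 := by simp [clamp]
lemma clamp_one : clamp 1 = 1 := by simp [clamp]
lemma clamp_of_mem {x : ℝ} (hx : x ∈ Icc (0:ℝ) 1) : clamp x = x := by
  simp [clamp, hx.1, hx.2]

def chord (u v : ℂ) (s : ℝ) : ℂ := u + (clamp s : ℂ) * (v - u)

lemma continuous_chord (u v : ℂ) : Continuous (chord u v) := by
  unfold chord
  have := continuous_clamp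
  fun_prop

lemma chord_zero (u v : ℂ) : chord u v 0 = u := by simp [chord, clamp_zero]
lemma chord_one (u v : ℂ) : chord u v 1 = v := by simp [chord, clamp_one]

lemma chord_mem {u v : ℂ} (hu : ‖u‖ = 1) (hv : ‖v‖ = 1) (hne : u ≠ v) (s : ℝ) :
    chord u v s = u ∨ chord u v s = v ∨ chord u v s ∈ ball (0:ℂ) 1 := by
  obtain ⟨h0, h1⟩ := clamp_mem s
  rcases h0.eq_or_lt with h | h
  · left; simp [chord, ← h]
  rcases h1.eq_or_lt with h' | h'
  · right; left; simp [chord, h']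
  right; right
  have hsc : StrictConvex ℝ (closedBall (0:ℂ) 1) := strictConvex_closedBall ℝ (0:ℂ) 1
  have hu' : u ∈ closedBall (0:ℂ) 1 := by simp [hu]
  have hv' : v ∈ closedBall (0:ℂ) 1 := by simp [hv]
  have hk : 0 < 1 - clamp s := by linarith
  have := hsc hu' hv' hne hk h (by ring)
  rw [interior_closedBall _ one_ne_zero] at this
  convert this using 1
  simp only [chord, Complex.real_smul]; push_cast; ring

lemma unitCirc_sub_eq (α β : ℝ) : unitCirc α - unitCirc β =
      (2 * Complex.I) * Complex.exp (((Real.pi * (α + β) : ℝ) : ℂ) * Complex.I) *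
        ((Real.sin (Real.pi * (α - β)) : ℝ) : ℂ) := by
  unfold unitCirc
  push_cast
  rw [Complex.sin]
  have h1 : (2 * (Real.pi:ℂ) * Complex.I * α) = (Real.pi * (α + β)) * Complex.I
    + (Real.pi * (α - β)) * Complex.I := by ring
  have h2 : (2 * (Real.pi:ℂ) * Complex.I * β) = (Real.pi * (α + β)) * Complex.I
    + -(Real.pi * (α - β)) * Complex.I := by ring
  rw [h1, h2, Complex.exp_add, Complex.exp_add]
  linear_combination (-Complex.exp (Real.pi * (α + β) * Complex.I) *
    (Complex.exp (-(Real.pi * (α - β)) * Complex.I) - Complex.exp ((Real.pi * (α - β)) * Complex.I)))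
     * Complex.I_sq

lemma ratio_im {α η β : ℝ} (hs : Real.sin (Real.pi * (η - β)) ≠ 0) :
    ((unitCirc α - unitCirc β) / (unitCirc η - unitCirc β)).im =
      Real.sin (Real.pi * (α - η)) * (Real.sin (Real.pi * (α - β)) / Real.sin (Real.pi * (η - β))) := by
  have : (unitCirc α - unitCirc β) / (unitCirc η - unitCirc β) =
      Complex.exp (((Real.pi * (α - η) : ℝ) : ℂ) * Complex.I) *
      ((Real.sin (Real.pi * (α - β)) / Real.sin (Real.pi * (η - β)) : ℝ) : ℂ) := by
    rw [unitCirc_sub_eq, unitCirc_sub_eq]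
    have e : (((Real.pi * (α + β) : ℝ) : ℂ) * Complex.I) =
      (((Real.pi * (α - η) : ℝ) : ℂ) * Complex.I) + (((Real.pi * (η + β) : ℝ) : ℂ) * Complex.I) := by
      push_cast; ring
    rw [e, Complex.exp_add, Complex.ofReal_div]
    have hs' : ((Real.sin (Real.pi * (η - β)) : ℝ) : ℂ) ≠ 0 := by exact_mod_cast hs
    have h1 := Complex.exp_ne_zero (((Real.pi * (η + β) : ℝ) : ℂ) * Complex.I)
    have h2 := Complex.I_ne_zero
    field_simp
  rw [this, Complex.im_mul_ofReal, Complex.exp_ofReal_mul_I_im]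

/-- increment of `(u - w)` along a chord -/
lemma inc_chord {u v w : ℂ} (huw : u - w ≠ 0) (him : ((v - w) / (u - w)).im ≠ 0) :
    inc (fun s => chord u v s - w) = Complex.log ((v - w) / (u - w)) := by
  set ρ := (v - w) / (u - w) with hρ
  have hvw : v - w = ρ * (u - w) := by rw [hρ]; field_simp
  have hsl : ∀ x, (1 + (clamp x : ℂ) * (ρ - 1)) ∈ Complex.slitPlane := by
    intro x
    rw [Complex.mem_slitPlane_iff]
    by_cases h0 : clamp x = 0
    · left; simp [h0]
    · right; simp [h0, him]
  have hL : Continuous fun x => Complex.log (1 + (clamp x : ℂ) * (ρ - 1)) := by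
    refine Continuous.clog ?_ hsl
    have := continuous_clamp
    fun_prop
  rw [inc_eq (L := fun x => Complex.log (u - w) + Complex.log (1 + (clamp x : ℂ) * (ρ - 1)))
    (continuous_const.add hL)]
  · simp [clamp_zero, clamp_one]
  · intro x
    rw [Complex.exp_add, Complex.exp_log huw, Complex.exp_log (Complex.slitPlane_ne_zero (hsl x)),
      chord]
    have : v - u = (ρ - 1) * (u - w) := by linear_combination hvw
    rw [this]; ring

lemma inc_neg_fun {f g : ℝ → ℂ} (hf : Continuous f) (hf0 : ∀ x, f x ≠ 0) (hg : ∀ x, g x = -f x) :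
    inc g = inc f := by
  have : g = fun x => (-1 : ℂ) * f x := by ext x; rw [hg]; ring
  rw [this, inc_mul continuous_const hf (by simp) hf0, inc_const (by simp), zero_add]

lemma JD.quot_cont {H : ℂ → ℂ} (h : JD H) {z0 : ℂ} (hz : z0 ∈ ball (0:ℂ) 1) :
    ContinuousAt (fun q : ℂ × ℂ => dslope H q.2 q.1) (z0, z0) := by
  have han : AnalyticAt ℂ H z0 := (h.holo.analyticOnNhd isOpen_ball) z0 hz
  have hs : HasStrictDerivAt H (deriv H z0) z0 := han.hasStrictDerivAt
  have hdc : ContinuousAt (deriv H) z0 := han.deriv.continuousAt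
  have hlo := hs.hasStrictFDerivAt.isLittleO
  rw [Metric.continuousAt_iff']
  intro ε hε
  have h1 := hlo.def (half_pos hε)
  have h2 : ∀ᶠ q : ℂ × ℂ in nhds (z0, z0), dist (deriv H q.2) (deriv H z0) < ε := by
    have : ContinuousAt (fun q : ℂ × ℂ => deriv H q.2) (z0, z0) :=
      ContinuousAt.comp (f := Prod.snd) (g := deriv H) (x := (z0, z0)) hdc continuousAt_snd
    exact (Metric.continuousAt_iff'.1 this) ε hε
  filter_upwards [h1, h2] with q hq1 hq2
  simp only [dslope_same]
  by_cases he : q.1 = q.2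
  · rw [he, dslope_same]; exact hq2
  · rw [dslope_of_ne _ he, slope_def_field, dist_eq_norm]
    have hne : q.1 - q.2 ≠ 0 := sub_ne_zero.2 he
    have hnp : 0 < ‖q.1 - q.2‖ := norm_pos_iff.2 hne
    have e : (H q.1 - H q.2) / (q.1 - q.2) - deriv H z0 =
      (H q.1 - H q.2 - (q.1 - q.2) * deriv H z0) / (q.1 - q.2) := by field_simp
    rw [e, norm_div, div_lt_iff₀ hnp]
    simp at hq1
    nlinarith

lemma JD.crossing {H : ℂ → ℂ} (h : JD H) {γ1 γ2 : ℝ → ℂ} (hc1 : Continuous γ1)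
    (hc2 : Continuous γ2) (hz1 : ∀ x, γ1 x ∉ Zd H) (hz2 : ∀ x, γ2 x ∉ Zd H) {a p y b : ℝ}
    (hap : a < p) (hpy : p < y) (hyb : y < b) (hba : b < a + 1)
    (e10 : γ1 0 = pt H a) (e11 : γ1 1 = pt H y) (e20 : γ2 0 = pt H p) (e21 : γ2 1 = pt H b) :
    ∃ s t, γ1 s = γ2 t := by
  by_contra hcon
  push Not at hcon
  -- distinct points
  have hne : ∀ {α β : ℝ}, α < β → β < α + 1 → unitCirc α ≠ unitCirc β := by
    intro α β h1 h2 he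
    have := unitCirc_inj (abs_lt.2 ⟨by linarith, by linarith⟩) he
    linarith
  have nab := hne (hap.trans (hpy.trans hyb)) hba
  have nap := hne hap (by linarith)
  have nay := hne (hap.trans hpy) (by linarith)
  have npy := hne hpy (by linarith)
  have npb := hne (hpy.trans hyb) (by linarith)
  have nyb := hne hyb (by linarith)
  set c1 := chord (unitCirc y) (unitCirc a) with hc1d
  set c2 := chord (unitCirc b) (unitCirc p) with hc2d
  have c1c : Continuous c1 := continuous_chord _ _
  have c2c : Continuous c2 := continuous_chord _ _
  have c10 : c1 0 = unitCirc y := chord_zero _ _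
  have c11 : c1 1 = unitCirc a := chord_one _ _
  have c20 : c2 0 = unitCirc b := chord_zero _ _
  have c21 : c2 1 = unitCirc p := chord_one _ _
  have m1 : ∀ s, c1 s = unitCirc y ∨ c1 s = unitCirc a ∨ c1 s ∈ ball (0:ℂ) 1 :=
    chord_mem (norm_unitCirc _) (norm_unitCirc _) nay.symm
  have m2 : ∀ s, c2 s = unitCirc b ∨ c2 s = unitCirc p ∨ c2 s ∈ ball (0:ℂ) 1 :=
    chord_mem (norm_unitCirc _) (norm_unitCirc _) npb.symm
  have k1 : ∀ s, c1 s ∈ closedBall (0:ℂ) 1 := by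
    intro s; rcases m1 s with h | h | h
    · rw [h]; exact unitCirc_memc _
    · rw [h]; exact unitCirc_memc _
    · exact ball_subset_closedBall h
  have k2 : ∀ s, c2 s ∈ closedBall (0:ℂ) 1 := by
    intro s; rcases m2 s with h | h | h
    · rw [h]; exact unitCirc_memc _
    · rw [h]; exact unitCirc_memc _
    · exact ball_subset_closedBall h
  have Hc1 : Continuous fun s => H (c1 s) := h.contOn.comp_continuous c1c k1
  have Hc2 : Continuous fun s => H (c2 s) := h.contOn.comp_continuous c2c k2
  -- nonvanishing
  have n1 : ∀ x : ℝ × ℝ, γ1 x.1 - γ2 x.2 ≠ 0 := fun x => sub_ne_zero.2 (hcon _ _)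
  have n2 : ∀ x : ℝ × ℝ, γ1 x.1 - H (c2 x.2) ≠ 0 := by
    intro x
    refine sub_ne_zero.2 fun he => ?_
    rcases m2 x.2 with h' | h' | h'
    · rw [h'] at he; exact hcon x.1 1 (by rw [he, e21]; rfl)
    · rw [h'] at he; exact hcon x.1 0 (by rw [he, e20]; rfl)
    · exact hz1 x.1 ⟨_, h', he.symm⟩
  have n3 : ∀ x : ℝ × ℝ, H (c1 x.1) - γ2 x.2 ≠ 0 := by
    intro x
    refine sub_ne_zero.2 fun he => ?_
    rcases m1 x.1 with h' | h' | h'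
    · rw [h'] at he; exact hcon 1 x.2 (by rw [← he, e11]; rfl)
    · rw [h'] at he; exact hcon 0 x.2 (by rw [← he, e10]; rfl)
    · exact hz2 x.2 ⟨_, h', he⟩
  have hmeet : ∀ s t, c1 s = c2 t → c1 s ∈ ball (0:ℂ) 1 := by
    intro s t he
    rcases m1 s with h' | h' | h'
    · rcases m2 t with h'' | h'' | h''
      · exact absurd (h'.symm.trans (he.trans h'')) nyb
      · exact absurd (h'.symm.trans (he.trans h'')) npy.symm
      · rwa [he]
    · rcases m2 t with h'' | h'' | h''
      · exact absurd (h'.symm.trans (he.trans h'')) nab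
      · exact absurd (h'.symm.trans (he.trans h'')) nap
      · rwa [he]
    · exact h'
  set Q : ℝ × ℝ → ℂ := fun x => dslope H (c2 x.2) (c1 x.1) with hQ
  have hQc : Continuous Q := by
    rw [continuous_iff_continuousAt]
    rintro ⟨s, t⟩
    by_cases he : c1 s = c2 t
    · have hb := hmeet s t he
      have := h.quot_cont hb
      have hcc : ContinuousAt (fun x : ℝ × ℝ => (c1 x.1, c2 x.2)) (s, t) :=
        (by fun_prop : Continuous fun x : ℝ × ℝ => (c1 x.1, c2 x.2)).continuousAt
      exact ContinuousAt.comp (f := fun x : ℝ × ℝ => (c1 x.1, c2 x.2))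
        (g := fun q : ℂ × ℂ => dslope H q.2 q.1) (x := (s, t)) (by
          simp only; rw [← he]; exact this) hcc
    · have hcd : Continuous fun x : ℝ × ℝ => c1 x.1 - c2 x.2 := by fun_prop
      have hnum : Continuous fun x : ℝ × ℝ => H (c1 x.1) - H (c2 x.2) :=
        (Hc1.comp continuous_fst).sub (Hc2.comp continuous_snd)
      have hne0 : c1 s - c2 t ≠ 0 := sub_ne_zero.2 he
      have hev : ∀ᶠ x : ℝ × ℝ in nhds (s, t), c1 x.1 - c2 x.2 ≠ 0 :=
        hcd.continuousAt.eventually_ne hne0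
      refine ContinuousAt.congr (f := fun x : ℝ × ℝ => (H (c1 x.1) - H (c2 x.2)) /
        (c1 x.1 - c2 x.2)) (hnum.continuousAt.div hcd.continuousAt hne0) ?_
      filter_upwards [hev] with x hx
      simp only [hQ]
      rw [dslope_of_ne _ (sub_ne_zero.1 hx), slope_def_field]
  have hQ0 : ∀ x, Q x ≠ 0 := by
    rintro ⟨s, t⟩
    simp only [hQ]
    by_cases he : c1 s = c2 t
    · rw [← he, dslope_same]; exact h.deriv_ne (hmeet s t he)
    · rw [dslope_of_ne _ he, slope_def_field]
      refine div_ne_zero (sub_ne_zero.2 fun hh => he (h.injOn (k1 s) (k2 t) hh)) (sub_ne_zero.2 he)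
  have hfac : ∀ s t, H (c1 s) - H (c2 t) = (c1 s - c2 t) * Q (s, t) := by
    intro s t
    have := sub_smul_dslope H (c2 t) (c1 s)
    simp only [smul_eq_mul] at this
    rw [← this]
  -- sines
  have sp : ∀ {x : ℝ}, 0 < x → x < 1 → 0 < Real.sin (Real.pi * x) := by
    intro x h0 h1
    exact Real.sin_pos_of_pos_of_lt_pi (by positivity) (by nlinarith [Real.pi_pos])
  have sn : ∀ {x : ℝ}, x < 0 → -1 < x → Real.sin (Real.pi * x) < 0 := by
    intro x h0 h1
    exact Real.sin_neg_of_neg_of_neg_pi_lt (by nlinarith [Real.pi_pos]) (by nlinarith [Real.pi_pos])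
  have im1 : ((unitCirc a - unitCirc b) / (unitCirc y - unitCirc b)).im < 0 := by
    rw [ratio_im (sn (by linarith) (by linarith)).ne]
    exact mul_neg_of_neg_of_pos (sn (by linarith) (by linarith))
      (div_pos_of_neg_of_neg (sn (by linarith) (by linarith)) (sn (by linarith) (by linarith)))
  have im2 : ((unitCirc p - unitCirc a) / (unitCirc b - unitCirc a)).im < 0 := by
    rw [ratio_im (sp (by linarith) (by linarith)).ne']
    exact mul_neg_of_neg_of_pos (sn (by linarith) (by linarith))
      (div_pos (sp (by linarith) (by linarith)) (sp (by linarith) (by linarith)))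
  have im3 : 0 < ((unitCirc p - unitCirc y) / (unitCirc b - unitCirc y)).im := by
    rw [ratio_im (sp (by linarith) (by linarith)).ne']
    exact mul_pos_of_neg_of_neg (sn (by linarith) (by linarith))
      (div_neg_of_neg_of_pos (sn (by linarith) (by linarith)) (sp (by linarith) (by linarith)))
  have im4 : 0 < ((unitCirc a - unitCirc p) / (unitCirc y - unitCirc p)).im := by
    rw [ratio_im (sp (by linarith) (by linarith)).ne']
    exact mul_pos_of_neg_of_neg (sn (by linarith) (by linarith))
      (div_neg_of_neg_of_pos (sn (by linarith) (by linarith)) (sp (by linarith) (by linarith)))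
  have i1 : inc (fun s => c1 s - unitCirc b) = _ := inc_chord (sub_ne_zero.2 nyb) im1.ne
  have i2 : inc (fun s => c2 s - unitCirc a) = _ := inc_chord (sub_ne_zero.2 nab.symm) im2.ne
  have i3 : inc (fun s => c2 s - unitCirc y) = _ := inc_chord (sub_ne_zero.2 nyb.symm) im3.ne'
  have i4 : inc (fun s => c1 s - unitCirc p) = _ := inc_chord (sub_ne_zero.2 npy.symm) im4.ne'
  have v1 : ∀ s, c1 s - unitCirc b ≠ 0 := by
    intro s he
    have hh : c1 s = c2 0 := by rw [c20]; exact sub_eq_zero.1 he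
    have := hmeet s 0 hh
    rw [hh, c20] at this; simp [norm_unitCirc] at this
  have v4 : ∀ s, c1 s - unitCirc p ≠ 0 := by
    intro s he
    have hh : c1 s = c2 1 := by rw [c21]; exact sub_eq_zero.1 he
    have := hmeet s 1 hh
    rw [hh, c21] at this; simp [norm_unitCirc] at this
  have v3 : ∀ s, c2 s - unitCirc y ≠ 0 := by
    intro s he
    have hh : c1 0 = c2 s := by rw [c10]; exact (sub_eq_zero.1 he).symm
    have := hmeet 0 s hh
    rw [c10] at this; simp [norm_unitCirc] at this
  have v2 : ∀ s, c2 s - unitCirc a ≠ 0 := by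
    intro s he
    have hh : c1 1 = c2 s := by rw [c11]; exact (sub_eq_zero.1 he).symm
    have := hmeet 1 s hh
    rw [c11] at this; simp [norm_unitCirc] at this
  have q1 := inc_square (F := fun x => γ1 x.1 - γ2 x.2) (by fun_prop) n1
  have q2 := inc_square (F := fun x => γ1 x.1 - H (c2 x.2))
    ((hc1.comp continuous_fst).sub (Hc2.comp continuous_snd)) n2
  have q3 := inc_square (F := fun x => H (c1 x.1) - γ2 x.2)
    ((Hc1.comp continuous_fst).sub (hc2.comp continuous_snd)) n3
  have q4 := inc_square hQc hQ0
  simp only [e10, e11, e20, e21, c10, c11, c20, c21] at q1 q2 q3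
  -- factorizations
  have f1 : inc (fun s => H (c1 s) - pt H b) = inc (fun s => c1 s - unitCirc b)
      + inc (fun s => Q (s, 0)) := by
    rw [← inc_mul (by fun_prop) (by fun_prop) v1 (fun x => hQ0 _)]
    congr 1; ext s; have := hfac s 0; rw [c20] at this; exact this
  have f4 : inc (fun s => H (c1 s) - pt H p) = inc (fun s => c1 s - unitCirc p)
      + inc (fun s => Q (s, 1)) := by
    rw [← inc_mul (by fun_prop) (by fun_prop) v4 (fun x => hQ0 _)]
    congr 1; ext s; have := hfac s 1; rw [c21] at this; exact this
  have f3 : inc (fun t => pt H y - H (c2 t)) = inc (fun s => c2 s - unitCirc y)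
      + inc (fun t => Q (0, t)) := by
    rw [← inc_mul (by fun_prop) (by fun_prop) v3 (fun x => hQ0 _)]
    refine inc_neg_fun (by fun_prop) (fun x => mul_ne_zero (v3 x) (hQ0 _)) fun t => ?_
    have := hfac 0 t; rw [c10] at this; rw [pt, this]; ring
  have f2 : inc (fun t => pt H a - H (c2 t)) = inc (fun s => c2 s - unitCirc a)
      + inc (fun t => Q (1, t)) := by
    rw [← inc_mul (by fun_prop) (by fun_prop) v2 (fun x => hQ0 _)]
    refine inc_neg_fun (by fun_prop) (fun x => mul_ne_zero (v2 x) (hQ0 _)) fun t => ?_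
    have := hfac 1 t; rw [c11] at this; rw [pt, this]; ring
  have q2' : inc (fun s => γ1 s - pt H b) + inc (fun t => pt H y - H (c2 t)) =
    inc (fun t => pt H a - H (c2 t)) + inc (fun s => γ1 s - pt H p) := q2
  have q3' : inc (fun s => H (c1 s) - pt H p) + inc (fun t => pt H a - γ2 t) =
    inc (fun t => pt H y - γ2 t) + inc (fun s => H (c1 s) - pt H b) := q3
  have fin : inc (fun s => c2 s - unitCirc y) + inc (fun s => c1 s - unitCirc p) =
      inc (fun s => c2 s - unitCirc a) + inc (fun s => c1 s - unitCirc b) := by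
    linear_combination q1 + q2' + q3' + q4 - f3 - f4 + f2 + f1
  rw [i1, i2, i3, i4] at fin
  have := congrArg Complex.im fin
  simp only [Complex.add_im, Complex.log_im] at this
  have a1 := Complex.arg_neg_iff.2 im1
  have a2 := Complex.arg_neg_iff.2 im2
  have a3 := Complex.arg_nonneg_iff.2 im3.le
  have a4 := Complex.arg_nonneg_iff.2 im4.le
  linarith

lemma JD.crossing' {H : ℂ → ℂ} (h : JD H) {γ1 γ2 : ℝ → ℂ} (hc1 : ContinuousOn γ1 (Icc 0 1))
    (hc2 : ContinuousOn γ2 (Icc 0 1)) (hz1 : ∀ x ∈ Icc (0:ℝ) 1, γ1 x ∉ Zd H)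
    (hz2 : ∀ x ∈ Icc (0:ℝ) 1, γ2 x ∉ Zd H) {a p y b : ℝ}
    (hap : a < p) (hpy : p < y) (hyb : y < b) (hba : b < a + 1)
    (e10 : γ1 0 = pt H a) (e11 : γ1 1 = pt H y) (e20 : γ2 0 = pt H p) (e21 : γ2 1 = pt H b) :
    ∃ s ∈ Icc (0:ℝ) 1, ∃ t ∈ Icc (0:ℝ) 1, γ1 s = γ2 t := by
  obtain ⟨s, t, hst⟩ := h.crossing (γ1 := fun x => γ1 (clamp x)) (γ2 := fun x => γ2 (clamp x))
    (hc1.comp_continuous continuous_clamp clamp_mem)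
    (hc2.comp_continuous continuous_clamp clamp_mem) (fun x => hz1 _ (clamp_mem x))
    (fun x => hz2 _ (clamp_mem x)) hap hpy hyb hba (by rw [clamp_zero, e10])
    (by rw [clamp_one, e11]) (by rw [clamp_zero, e20]) (by rw [clamp_one, e21])
  exact ⟨_, clamp_mem s, _, clamp_mem t, hst⟩

lemma cs_sq {α : Type*} [MeasurableSpace α] (μ : Measure α) {f : α → ℝ≥0∞} (hf : AEMeasurable f μ) :
    (∫⁻ x, f x ∂μ) ^ 2 ≤ μ univ * ∫⁻ x, f x ^ 2 ∂μ := by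
  have h := ENNReal.lintegral_mul_le_Lp_mul_Lq μ (Real.HolderConjugate.two_two)
    (f := fun _ => 1) (g := f) aemeasurable_const hf
  simp only [Pi.mul_apply, one_mul, ENNReal.one_rpow, lintegral_const] at h
  have h2 : (∫⁻ x, f x ∂μ) ^ (2:ℝ) ≤ ((μ univ) ^ (1 / (2:ℝ)) *
      (∫⁻ x, f x ^ (2:ℝ) ∂μ) ^ (1 / (2:ℝ))) ^ (2:ℝ) := ENNReal.rpow_le_rpow h (by norm_num)
  rw [ENNReal.mul_rpow_of_nonneg _ _ (by norm_num), ← ENNReal.rpow_mul, ← ENNReal.rpow_mul] at h2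
  norm_num at h2
  exact h2

lemma len_comb_le {ρ ρ' : ℂ → ℝ≥0∞} (γ : ℝ → ℂ) (s t : ℝ) (a b : ℝ≥0∞) :
    a * len ρ γ s t + b * len ρ' γ s t ≤ len (fun z => a * ρ z + b * ρ' z) γ s t := by
  unfold len
  refine (add_le_add (lintegral_const_mul_le _ _) (lintegral_const_mul_le _ _)).trans ?_
  refine (le_lintegral_add _ _).trans (lintegral_mono fun x => ?_)
  simp only; exact le_of_eq (by ring)

lemma pairing_lower {Γ : Set (ℝ → ℂ)} {w P : ℝ} (hw : 0 < w) (hP : 0 ≤ P)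
    (hW : ENNReal.ofReal w ≤ extremalWidth Γ) :
    ∃ ε : ℝ, 0 < ε ∧ ε ≤ w ∧ ∀ ρ0 ρ1 : ℂ → ℝ≥0∞, Measurable ρ0 → Measurable ρ1 →
      (∀ γ ∈ Γ, 1 ≤ len ρ0 γ 0 1) → (∀ γ ∈ Γ, 1 ≤ len ρ1 γ 0 1) →
      area ρ0 ≤ ENNReal.ofReal (w + ε) → area ρ1 ≤ ENNReal.ofReal P →
      ENNReal.ofReal (w / 2) ≤ ∫⁻ z, ρ0 z * ρ1 z := by
  set t : ℝ := w / (2 * (2 * w + P)) with ht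
  have htp : 0 < t := by positivity
  have ht1 : t < 1 := by
    rw [ht, div_lt_one (by positivity)]; linarith
  have htw : t * (2 * w + P) = w / 2 := by rw [ht]; field_simp
  refine ⟨min w (t * w / 2), by positivity, min_le_left _ _, ?_⟩
  intro ρ0 ρ1 m0 m1 a0 a1 A0 A1
  set ε := min w (t * w / 2) with hε
  have hε1 : ε ≤ w := min_le_left _ _
  have hε2 : ε ≤ t * w / 2 := min_le_right _ _
  have hε0 : 0 < ε := by positivity
  set X := ∫⁻ z, ρ0 z * ρ1 z with hX
  by_contra hlt
  rw [not_le] at hlt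
  have hXfin : X ≠ ⊤ := ne_top_of_lt hlt
  have hX' : X = ENNReal.ofReal X.toReal := (ENNReal.ofReal_toReal hXfin).symm
  have hXlt : X.toReal < w / 2 := by
    rw [hX', ENNReal.ofReal_lt_ofReal_iff (by positivity)] at hlt; exact hlt
  have hX0 : 0 ≤ X.toReal := ENNReal.toReal_nonneg
  have h1t : (0:ℝ) ≤ 1 - t := by linarith
  have adm : ∀ γ ∈ Γ, 1 ≤ len (fun z => ENNReal.ofReal (1 - t) * ρ0 z + ENNReal.ofReal t * ρ1 z) γ 0 1 := by
    intro γ hγ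
    refine le_trans ?_ (len_comb_le γ 0 1 _ _)
    calc (1 : ℝ≥0∞) = ENNReal.ofReal (1 - t) * 1 + ENNReal.ofReal t * 1 := by
          rw [mul_one, mul_one, ← ENNReal.ofReal_add h1t htp.le]; simp
      _ ≤ _ := by gcongr; exacts [a0 γ hγ, a1 γ hγ]
  have hle := hW.trans (width_le_area (by fun_prop) adm)
  have earea : area (fun z => ENNReal.ofReal (1 - t) * ρ0 z + ENNReal.ofReal t * ρ1 z)
      = ENNReal.ofReal (1 - t) ^ 2 * area ρ0 + 2 * ENNReal.ofReal (1 - t) * ENNReal.ofReal t * X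
        + ENNReal.ofReal t ^ 2 * area ρ1 := by
    unfold area
    rw [hX, ← lintegral_const_mul _ (by fun_prop), ← lintegral_const_mul _ (by fun_prop),
      ← lintegral_const_mul _ (by fun_prop), ← lintegral_add_left (by fun_prop),
      ← lintegral_add_left (by fun_prop)]
    refine lintegral_congr fun z => ?_
    ring
  rw [earea] at hle
  have : ENNReal.ofReal w ≤ ENNReal.ofReal ((1 - t) ^ 2 * (w + ε) + 2 * (1 - t) * t * X.toReal
      + t ^ 2 * P) := by
    refine hle.trans ?_
    rw [ENNReal.ofReal_add (by positivity) (by positivity),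
      ENNReal.ofReal_add (by positivity) (by positivity), ENNReal.ofReal_mul (by positivity),
      ENNReal.ofReal_mul (p := 2 * (1 - t) * t) (by positivity), ENNReal.ofReal_mul (p := t ^ 2) (by positivity),
      ENNReal.ofReal_mul (p := 2 * (1 - t)) (by positivity),
      ENNReal.ofReal_mul (p := 2) (by positivity),
      ENNReal.ofReal_pow h1t, ENNReal.ofReal_pow htp.le, ← hX', ENNReal.ofReal_ofNat]
    gcongr
  rw [ENNReal.ofReal_le_ofReal_iff (by positivity)] at this
  have s1 : 2 * (1 - t) * t * X.toReal < t * w := by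
    have : 2 * (1 - t) * t * X.toReal ≤ 2 * t * X.toReal := by
      have : 0 ≤ t * t * X.toReal := by positivity
      nlinarith
    nlinarith
  have s2 : t ^ 2 * (2 * w + P) = t * (w / 2) := by rw [← htw]; ring
  nlinarith

/-- the abstract duality -/
lemma abstract_duality {Γ1 Γ2 : Set (ℝ → ℂ)} {R r : ℝ} (hr : 0 < r) (hR : 0 < R)
    (h1 : ∀ γ ∈ Γ1, IsCurve γ ∧ (∀ t ∈ Icc (0:ℝ) 1, γ t ∈ ball (0:ℂ) R) ∧ 4 * r ≤ ‖γ 1 - γ 0‖)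
    (h2 : ∀ γ ∈ Γ2, IsCurve γ ∧ (∀ t ∈ Icc (0:ℝ) 1, γ t ∈ ball (0:ℂ) R) ∧ 4 * r ≤ ‖γ 1 - γ 0‖)
    (hmeet : ∀ γ1 ∈ Γ1, ∀ γ2 ∈ Γ2, ∃ s ∈ Icc (0:ℝ) 1, ∃ t ∈ Icc (0:ℝ) 1, γ1 s = γ2 t) :
    extremalWidth Γ1 ≤ 1300 ∨ extremalWidth Γ2 ≤ 1300 := by
  by_cases hw1 : extremalWidth Γ1 ≤ 1300
  · exact Or.inl hw1
  right
  rw [not_le] at hw1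
  -- some endpoint is far from any point of the curve
  have far : ∀ {γ : ℝ → ℂ}, 4 * r ≤ ‖γ 1 - γ 0‖ → ∀ τ, ∃ τ' ∈ Icc (0:ℝ) 1, r ≤ ‖γ τ' - γ τ‖ := by
    intro γ hγ τ
    by_contra hcon
    push Not at hcon
    have e0 := hcon 0 ⟨le_rfl, zero_le_one⟩
    have e1 := hcon 1 ⟨zero_le_one, le_rfl⟩
    have : ‖γ 1 - γ 0‖ ≤ ‖γ 1 - γ τ‖ + ‖γ 0 - γ τ‖ := by
      have : γ 1 - γ 0 = (γ 1 - γ τ) - (γ 0 - γ τ) := by ring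
      rw [this]; exact norm_sub_le _ _
    linarith
  have hrinv : ENNReal.ofReal (1 / r) * ENNReal.ofReal r = 1 := by
    rw [← ENNReal.ofReal_mul (by positivity), one_div_mul_cancel hr.ne', ENNReal.ofReal_one]
  have volb : ∀ (z : ℂ) {q : ℝ}, 0 ≤ q → volume (ball z q) = ENNReal.ofReal (Real.pi * q ^ 2) := by
    intro z q hq
    rw [Complex.volume_ball, mul_comm, ENNReal.ofReal_mul Real.pi_pos.le, ENNReal.ofReal_pow hq]
    congr 1
    rw [← NNReal.coe_real_pi]; exact (ENNReal.ofReal_coe_nnreal).symm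
  set P : ℝ := (1 / r) ^ 2 * (Real.pi * (R + r) ^ 2) with hPdef
  have hP0 : 0 ≤ P := by positivity
  have hball : ∀ T : Set ℂ, MeasurableSet T → T ⊆ ball 0 (R + r) →
      area (T.indicator fun _ => ENNReal.ofReal (1 / r)) ≤ ENNReal.ofReal P := by
    intro T hT hTs
    rw [area_indicator hT, hPdef, ENNReal.ofReal_mul (by positivity),
      ENNReal.ofReal_pow (by positivity)]
    gcongr
    rw [← volb 0 (by positivity)]
    exact measure_mono hTs
  -- finiteness of `w1`
  have hw1fin : extremalWidth Γ1 ≠ ⊤ := by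
    refine ne_top_of_le_ne_top ?_ (width_le_area (ρ := (ball (0:ℂ) (R + r)).indicator
      fun _ => ENNReal.ofReal (1 / r)) (measurable_ballMetric _ _ _) ?_)
    · exact ne_top_of_le_ne_top ENNReal.ofReal_ne_top (hball _ measurableSet_ball subset_rfl)
    · intro γ hγ
      obtain ⟨hc, hb, hd⟩ := h1 γ hγ
      obtain ⟨τ', hτ', hd'⟩ := far hd 0
      rw [← hrinv]
      refine len_ball hc ⟨le_rfl, zero_le_one⟩ hτ' hd' fun x hx _ => ?_
      have : γ x ∈ ball (0:ℂ) (R + r) := ball_subset_ball (by linarith) (hb x (Ioo_subset_Icc_self hx))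
      rw [indicator_of_mem this]
  set w := (extremalWidth Γ1).toReal with hwdef
  have hWw : ENNReal.ofReal w = extremalWidth Γ1 := ENNReal.ofReal_toReal hw1fin
  have hw : 1300 < w := by
    rw [← hWw] at hw1
    have := (ENNReal.lt_ofReal_iff_toReal_lt (by simp)).1 hw1
    simpa using this
  have hwp : 0 < w := by linarith
  obtain ⟨ε, hε0, hεw, hpair⟩ := pairing_lower hwp hP0 hWw.le
  obtain ⟨ρ0, m0, a0, A0⟩ : ∃ ρ : ℂ → ℝ≥0∞, Measurable ρ ∧ (∀ γ ∈ Γ1, 1 ≤ len ρ γ 0 1) ∧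
      area ρ < ENNReal.ofReal (w + ε) := by
    refine exists_metric_of_width_lt ?_
    rw [← hWw]; exact (ENNReal.ofReal_lt_ofReal_iff (by positivity)).2 (by linarith)
  -- the dual metric
  set κ : ℝ := 2 / (r ^ 2 * w) with hκ
  have hκ0 : 0 < κ := by positivity
  set k : ℂ → ℂ → ℝ≥0∞ := fun z ζ => (ball z (2 * r)).indicator ρ0 ζ with hk
  have hkm : Measurable (Function.uncurry k) := by
    have hs : MeasurableSet {q : ℂ × ℂ | dist q.2 q.1 < 2 * r} :=
      measurableSet_lt (by fun_prop) measurable_const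
    have : Function.uncurry k = {q : ℂ × ℂ | dist q.2 q.1 < 2 * r}.indicator fun q => ρ0 q.2 := by
      ext ⟨z, ζ⟩
      simp only [Function.uncurry, hk, indicator, mem_ball, mem_ofPred_eq]
    rw [this]
    exact (m0.comp measurable_snd).indicator hs
  set ρs : ℂ → ℝ≥0∞ := fun z => ENNReal.ofReal κ * ∫⁻ ζ, k z ζ with hρs
  have ms : Measurable ρs := measurable_const.mul hkm.lintegral_prod_right'
  have harea : area ρs ≤ 1300 := by
    have e1 : area ρs = ENNReal.ofReal κ ^ 2 * ∫⁻ z, (∫⁻ ζ, k z ζ) ^ 2 := by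
      rw [hρs]; exact area_const_mul hkm.lintegral_prod_right' _
    have V : ∀ z : ℂ, volume (ball z (2 * r)) = ENNReal.ofReal (Real.pi * (2 * r) ^ 2) :=
      fun z => volb z (by positivity)
    have e2 : ∀ z, (∫⁻ ζ, k z ζ) ^ 2 ≤ ENNReal.ofReal (Real.pi * (2 * r) ^ 2) *
        ∫⁻ ζ, (k z ζ) ^ 2 := by
      intro z
      have := cs_sq (volume.restrict (ball z (2 * r))) (f := ρ0) m0.aemeasurable
      rw [Measure.restrict_apply MeasurableSet.univ, univ_inter, V] at this
      have g1 : ∫⁻ ζ, k z ζ = ∫⁻ ζ in ball z (2 * r), ρ0 ζ := lintegral_indicator measurableSet_ball _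
      have g2 : ∫⁻ ζ, (k z ζ) ^ 2 = ∫⁻ ζ in ball z (2 * r), ρ0 ζ ^ 2 := by
        rw [← lintegral_indicator measurableSet_ball]
        refine lintegral_congr fun ζ => ?_
        simp only [hk, indicator]; split_ifs <;> simp
      rw [g1, g2]; exact this
    have e3 : ∫⁻ z, ∫⁻ ζ, (k z ζ) ^ 2 = ENNReal.ofReal (Real.pi * (2 * r) ^ 2) * area ρ0 := by
      rw [lintegral_lintegral_swap (hkm.pow_const 2).aemeasurable]
      unfold area
      rw [← lintegral_const_mul _ (m0.pow_const 2)]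
      refine lintegral_congr fun ζ => ?_
      have : (fun z => (k z ζ) ^ 2) = (ball ζ (2 * r)).indicator fun _ => ρ0 ζ ^ 2 := by
        ext z
        simp only [hk, indicator, mem_ball, dist_comm ζ z]; split_ifs <;> simp
      rw [this, lintegral_indicator measurableSet_ball, setLIntegral_const, V, mul_comm]
    have e4 : ∫⁻ z, (∫⁻ ζ, k z ζ) ^ 2 ≤ ENNReal.ofReal (Real.pi * (2 * r) ^ 2) *
        (ENNReal.ofReal (Real.pi * (2 * r) ^ 2) * area ρ0) := by
      rw [← e3]
      have hm2 : Measurable fun z => ∫⁻ ζ, (k z ζ) ^ 2 := (hkm.pow_const 2).lintegral_prod_right'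
      rw [← lintegral_const_mul _ hm2]
      exact lintegral_mono e2
    rw [e1]
    calc _ ≤ ENNReal.ofReal κ ^ 2 * (ENNReal.ofReal (Real.pi * (2 * r) ^ 2) *
        (ENNReal.ofReal (Real.pi * (2 * r) ^ 2) * ENNReal.ofReal (w + ε))) := by
          gcongr; exact e4.trans (by gcongr)
      _ = ENNReal.ofReal (κ ^ 2 * ((Real.pi * (2 * r) ^ 2) * ((Real.pi * (2 * r) ^ 2) * (w + ε)))) := by
          rw [ENNReal.ofReal_mul (p := κ ^ 2) (by positivity),
            ENNReal.ofReal_mul (p := Real.pi * (2 * r) ^ 2) (by positivity),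
            ENNReal.ofReal_mul (p := Real.pi * (2 * r) ^ 2) (q := w + ε) (by positivity),
            ENNReal.ofReal_pow hκ0.le]
      _ ≤ ENNReal.ofReal 1300 := by
          refine ENNReal.ofReal_le_ofReal ?_
          have : κ ^ 2 * ((Real.pi * (2 * r) ^ 2) * ((Real.pi * (2 * r) ^ 2) * (w + ε))) =
            64 * Real.pi ^ 2 * (w + ε) / w ^ 2 := by rw [hκ]; field_simp; ring
          rw [this, div_le_iff₀ (by positivity)]
          have hpi : Real.pi ^ 2 ≤ 16 := by nlinarith [Real.pi_le_four, Real.pi_pos]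
          have : 64 * Real.pi ^ 2 * (w + ε) ≤ 64 * 16 * (w + w) := by gcongr
          nlinarith
      _ = 1300 := by simp
  refine (width_le_area ms ?_).trans harea
  intro γ hγ
  obtain ⟨hc, hb, hd⟩ := h2 γ hγ
  set T : Set ℂ := thickening r (γ '' Icc 0 1) with hT
  have hTm : MeasurableSet T := isOpen_thickening.measurableSet
  have hTs : T ⊆ ball 0 (R + r) := by
    intro z hz
    obtain ⟨_, ⟨τ, hτ, rfl⟩, hlt⟩ := mem_thickening_iff.1 hz
    have := hb τ hτ
    rw [mem_ball] at this ⊢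
    linarith [dist_triangle z (γ τ) 0]
  have hX := hpair ρ0 (T.indicator fun _ => ENNReal.ofReal (1 / r)) m0
    (measurable_const.indicator hTm) a0 (by
      intro γ1 hγ1
      obtain ⟨hc1, hb1, hd1⟩ := h1 γ1 hγ1
      obtain ⟨s, hs, t, ht, hst⟩ := hmeet γ1 hγ1 γ hγ
      obtain ⟨τ', hτ', hd'⟩ := far hd1 s
      rw [← hrinv]
      refine len_ball hc1 hs hτ' hd' fun x hx hlt => ?_
      have : γ1 x ∈ T := mem_thickening_iff.2 ⟨γ t, ⟨t, ht, rfl⟩, by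
        rw [← hst, dist_eq_norm]; exact hlt⟩
      rw [indicator_of_mem this]) A0.le (hball T hTm hTs)
  have hX2 : ENNReal.ofReal (w / 2) ≤ ENNReal.ofReal (1 / r) * ∫⁻ ζ in T, ρ0 ζ := by
    refine hX.trans (le_of_eq ?_)
    rw [← lintegral_indicator hTm, ← lintegral_const_mul _ (m0.indicator hTm)]
    refine lintegral_congr fun z => ?_
    simp only [indicator]; split_ifs
    · ring
    · simp
  -- Fubini
  have hgc : Continuous fun x => γ (clamp x) := hc.1.comp_continuous continuous_clamp clamp_mem
  have hdm : Measurable fun x => (‖deriv γ x‖₊ : ℝ≥0∞) := (measurable_deriv γ).nnnorm.coe_nnreal_ennreal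
  have ek : ∀ z ζ, k z ζ = (ball ζ (2 * r)).indicator (fun _ => 1) z * ρ0 ζ := by
    intro z ζ; simp only [hk, indicator, mem_ball, dist_comm ζ z]; split_ifs <;> simp
  have F : len ρs γ 0 1 = ENNReal.ofReal κ * ∫⁻ ζ, ρ0 ζ * len ((ball ζ (2 * r)).indicator fun _ => 1) γ 0 1 := by
    have hjm : Measurable (Function.uncurry fun (x : ℝ) (ζ : ℂ) => k (γ (clamp x)) ζ * (‖deriv γ x‖₊ : ℝ≥0∞)) := by
      refine Measurable.mul ?_ (hdm.comp measurable_fst)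
      exact hkm.comp ((hgc.measurable.comp measurable_fst).prodMk measurable_snd)
    calc len ρs γ 0 1 = ∫⁻ x in Ioo (0:ℝ) 1, ENNReal.ofReal κ *
          ∫⁻ ζ, k (γ (clamp x)) ζ * (‖deriv γ x‖₊ : ℝ≥0∞) := by
          unfold len
          refine setLIntegral_congr_fun measurableSet_Ioo fun x hx => ?_
          rw [clamp_of_mem (Ioo_subset_Icc_self hx), lintegral_mul_const, hρs, mul_assoc]
          exact hkm.comp (measurable_const.prodMk measurable_id)
      _ = ENNReal.ofReal κ * ∫⁻ x in Ioo (0:ℝ) 1,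
          ∫⁻ ζ, k (γ (clamp x)) ζ * (‖deriv γ x‖₊ : ℝ≥0∞) :=
          lintegral_const_mul _ hjm.lintegral_prod_right'
      _ = ENNReal.ofReal κ * ∫⁻ ζ, ∫⁻ x in Ioo (0:ℝ) 1,
            k (γ (clamp x)) ζ * (‖deriv γ x‖₊ : ℝ≥0∞) := by
          rw [lintegral_lintegral_swap hjm.aemeasurable]
      _ = _ := by
          congr 1
          refine lintegral_congr fun ζ => ?_
          unfold len
          have hm : Measurable fun x => (ball ζ (2 * r)).indicator (fun _ => (1:ℝ≥0∞)) (γ (clamp x)) *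
              (‖deriv γ x‖₊ : ℝ≥0∞) :=
            (((measurable_ballMetric 1 ζ (2 * r))).comp hgc.measurable).mul hdm
          have : ∫⁻ x in Ioo (0:ℝ) 1, (ball ζ (2 * r)).indicator (fun _ => (1:ℝ≥0∞)) (γ x) *
              (‖deriv γ x‖₊ : ℝ≥0∞) = ∫⁻ x in Ioo (0:ℝ) 1,
              (ball ζ (2 * r)).indicator (fun _ => (1:ℝ≥0∞)) (γ (clamp x)) *
              (‖deriv γ x‖₊ : ℝ≥0∞) :=
            setLIntegral_congr_fun measurableSet_Ioo fun x hx => by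
              simp only [clamp_of_mem (Ioo_subset_Icc_self hx)]
          rw [this, ← lintegral_const_mul _ hm]
          refine lintegral_congr fun x => ?_
          rw [ek]; ring
  rw [F]
  have G1 : (∫⁻ ζ in T, ρ0 ζ) * ENNReal.ofReal r ≤
      ∫⁻ ζ, ρ0 ζ * len ((ball ζ (2 * r)).indicator fun _ => 1) γ 0 1 := by
    rw [← lintegral_mul_const _ m0]
    refine (setLIntegral_mono' hTm fun ζ hζ => ?_).trans (setLIntegral_le_lintegral T _)
    gcongr
    obtain ⟨_, ⟨τ, hτ, rfl⟩, hlt⟩ := mem_thickening_iff.1 hζ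
    obtain ⟨τ', hτ', hd'⟩ := far hd τ
    rw [← one_mul (ENNReal.ofReal r)]
    refine len_ball hc hτ hτ' hd' fun x hx hlt2 => ?_
    have : γ x ∈ ball ζ (2 * r) := by
      rw [mem_ball]
      rw [← dist_eq_norm] at hlt2
      rw [dist_comm] at hlt
      linarith [dist_triangle (γ x) (γ τ) ζ]
    rw [indicator_of_mem this]
  set Y := ∫⁻ ζ in T, ρ0 ζ with hY
  calc (1:ℝ≥0∞) = ENNReal.ofReal (κ * r * r * (w / 2)) := by
        rw [hκ]; rw [show 2 / (r ^ 2 * w) * r * r * (w / 2) = 1 by field_simp]; simp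
    _ = ENNReal.ofReal (κ * r * r) * ENNReal.ofReal (w / 2) := ENNReal.ofReal_mul (by positivity)
    _ ≤ ENNReal.ofReal (κ * r * r) * (ENNReal.ofReal (1 / r) * Y) := by gcongr
    _ = ENNReal.ofReal κ * (Y * ENNReal.ofReal r) := by
        rw [ENNReal.ofReal_mul (by positivity), ENNReal.ofReal_mul (by positivity)]
        calc _ = ENNReal.ofReal κ * (Y * ENNReal.ofReal r) * (ENNReal.ofReal (1 / r) * ENNReal.ofReal r) := by ring
          _ = _ := by rw [hrinv, mul_one]
    _ ≤ _ := by gcongr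

lemma exists_sep {A B : Set ℂ} (hA : IsCompact A) (hB : IsCompact B) (hd : Disjoint A B) :
    ∃ δ : ℝ, 0 < δ ∧ ∀ x ∈ A, ∀ y ∈ B, δ ≤ ‖y - x‖ := by
  obtain ⟨r, hr, h⟩ := Metric.exists_pos_forall_lt_edist hA hB.isClosed hd
  refine ⟨r, hr, fun x hx y hy => ?_⟩
  have := h x hx y hy
  rw [edist_nndist, ENNReal.coe_lt_coe] at this
  rw [← dist_eq_norm, dist_comm]
  have h2 : (r:ℝ) < nndist x y := by exact_mod_cast this
  exact h2.le

/-- `ρ` gives length at least one to every outer curve from `pt α` to `pt β`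
whenever `P α β`. -/
def KillsOut (H : ℂ → ℂ) (ρ : ℂ → ℝ≥0∞) (P : ℝ → ℝ → Prop) : Prop :=
  ∀ (γ : ℝ → ℂ) (s t α β : ℝ), CrvOn γ s t → s < t → (∀ x ∈ Icc s t, γ x ∉ Zd H) →
    γ s = pt H α → γ t = pt H β → P α β → 1 ≤ len ρ γ s t

lemma KillsOut.mono {H : ℂ → ℂ} {ρ ρ' : ℂ → ℝ≥0∞} {P : ℝ → ℝ → Prop} (h : KillsOut H ρ P)
    (hle : ∀ z, ρ z ≤ ρ' z) : KillsOut H ρ' P :=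
  fun γ s t α β h1 h2 h3 h4 h5 h6 => (h γ s t α β h1 h2 h3 h4 h5 h6).trans (len_mono hle)

lemma killsOut_of_width {H : ℂ → ℂ} {X Y : Set ℂ} {b : ℝ≥0∞}
    (h : widthIn (Zd H)ᶜ X Y < b) :
    ∃ ρ : ℂ → ℝ≥0∞, Measurable ρ ∧ area ρ ≤ b ∧
      KillsOut H ρ fun α β => (pt H α ∈ X ∧ pt H β ∈ Y) ∨ (pt H α ∈ Y ∧ pt H β ∈ X) := by
  obtain ⟨ρ, m, a, A⟩ := exists_metric_of_width_lt h
  refine ⟨ρ, m, A.le, ?_⟩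
  rintro γ s t α β hc hst hZ e1 e2 (⟨hX, hY⟩ | ⟨hX, hY⟩)
  · exact admissible_sub a hc hst hZ (by rwa [e1]) (by rwa [e2])
  · exact admissible_rev a hc hst hZ (by rwa [e2]) (by rwa [e1])

lemma JD.duality {H : ℂ → ℂ} (h : JD H) {x0 u m v y0 : ℝ} (h1 : x0 ≤ u) (h2 : u < m) (h3 : m < v)
    (h4 : v ≤ y0) (h5 : y0 ≤ x0 + 1 / 2) :
    ∃ ρ : ℂ → ℝ≥0∞, Measurable ρ ∧ area ρ ≤ 1400 ∧
      (KillsOut H ρ (fun α β => α ∈ Icc x0 u ∧ β ∈ Icc m v) ∨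
       KillsOut H ρ (fun α β => α ∈ Icc u m ∧ β ∈ Icc v y0)) := by
  obtain ⟨δ1, hδ1, sep1⟩ := exists_sep (h.isCompact_arc x0 u) (h.isCompact_arc m v)
    (h.disjoint_arc h2 (by linarith))
  obtain ⟨δ2, hδ2, sep2⟩ := exists_sep (h.isCompact_arc u m) (h.isCompact_arc v y0)
    (h.disjoint_arc h3 (by linarith))
  obtain ⟨R, hR0, hR⟩ : ∃ R : ℝ, 0 < R ∧ bd H ⊆ ball 0 R :=
    h.isCompact_bd.isBounded.subset_ball_lt 0 0
  set r := min δ1 δ2 / 4 with hr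
  have hr0 : 0 < r := by positivity
  have hr1 : 4 * r ≤ δ1 := by rw [hr]; linarith [min_le_left δ1 δ2]
  have hr2 : 4 * r ≤ δ2 := by rw [hr]; linarith [min_le_right δ1 δ2]
  set Γ1 : Set (ℝ → ℂ) := {γ | γ ∈ curveFamily (Zd H)ᶜ (arc H x0 u) (arc H m v) ∧
    ∀ t ∈ Icc (0:ℝ) 1, γ t ∈ ball (0:ℂ) (2 * R)} with hΓ1
  set Γ2 : Set (ℝ → ℂ) := {γ | γ ∈ curveFamily (Zd H)ᶜ (arc H u m) (arc H v y0) ∧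
    ∀ t ∈ Icc (0:ℝ) 1, γ t ∈ ball (0:ℂ) (2 * R)} with hΓ2
  have key := abstract_duality (Γ1 := Γ1) (Γ2 := Γ2) hr0 (by positivity : 0 < 2 * R)
    (by
      rintro γ ⟨⟨a, b, c, d⟩, e⟩
      exact ⟨a, e, hr1.trans (sep1 _ c _ d)⟩)
    (by
      rintro γ ⟨⟨a, b, c, d⟩, e⟩
      exact ⟨a, e, hr2.trans (sep2 _ c _ d)⟩)
    (by
      rintro γ1 ⟨⟨a, b, ⟨α, hα, c⟩, ⟨η, hη, d⟩⟩, e⟩ γ2 ⟨⟨a', b', ⟨π, hπ, c'⟩, ⟨β, hβ, d'⟩⟩, e'⟩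
      have i0 : (0:ℝ) ∈ Icc (0:ℝ) 1 := ⟨le_rfl, zero_le_one⟩
      have i1 : (1:ℝ) ∈ Icc (0:ℝ) 1 := ⟨zero_le_one, le_rfl⟩
      rcases (hα.2.trans hπ.1).eq_or_lt with g | g1
      · exact ⟨0, i0, 0, i0, by rw [← c, ← c', g]⟩
      rcases (hπ.2.trans hη.1).eq_or_lt with g | g2
      · exact ⟨1, i1, 0, i0, by rw [← d, ← c', g]⟩
      rcases (hη.2.trans hβ.1).eq_or_lt with g | g3
      · exact ⟨1, i1, 1, i1, by rw [← d, ← d', g]⟩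
      exact h.crossing' a.1 a'.1 b b' g1 g2 g3 (by linarith [hβ.2, hα.1]) c.symm d.symm
        c'.symm d'.symm)
  set σ : ℂ → ℝ≥0∞ := (ball (0:ℂ) (2 * R)).indicator fun _ => ENNReal.ofReal (1 / R) with hσ
  have mσ : Measurable σ := measurable_ballMetric _ _ _
  have Aσ : area σ ≤ 16 := by
    rw [hσ, area_indicator measurableSet_ball, Complex.volume_ball]
    have : (NNReal.pi : ℝ≥0∞) = ENNReal.ofReal Real.pi := by
      rw [← NNReal.coe_real_pi]; exact (ENNReal.ofReal_coe_nnreal).symm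
    rw [this, ← ENNReal.ofReal_pow (by positivity), ← ENNReal.ofReal_pow (by positivity),
      ← ENNReal.ofReal_mul (by positivity), ← ENNReal.ofReal_mul (by positivity)]
    rw [show (16:ℝ≥0∞) = ENNReal.ofReal 16 by simp]
    refine ENNReal.ofReal_le_ofReal ?_
    have : (1 / R) ^ 2 * ((2 * R) ^ 2 * Real.pi) = 4 * Real.pi := by field_simp; norm_num
    rw [this]; linarith [Real.pi_le_four]
  have esc : ∀ γ : ℝ → ℂ, IsCurve γ → γ 0 ∈ bd H →
      (¬ ∀ t ∈ Icc (0:ℝ) 1, γ t ∈ ball (0:ℂ) (2 * R)) → 1 ≤ len σ γ 0 1 := by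
    intro γ hc h0 hn
    push Not at hn
    obtain ⟨τ, hτ, hτ2⟩ := hn
    have g0 := hR h0
    have : (1 : ℝ≥0∞) = ENNReal.ofReal (1 / R) * ENNReal.ofReal R := by
      rw [← ENNReal.ofReal_mul (by positivity), one_div_mul_cancel hR0.ne', ENNReal.ofReal_one]
    rw [this]
    rw [mem_ball, dist_zero_right] at g0 hτ2
    refine len_ball hc ⟨le_rfl, zero_le_one⟩ hτ ?_ fun x hx hlt => ?_
    · linarith [norm_sub_norm_le (γ τ) (γ 0)]
    · have : γ x ∈ ball (0:ℂ) (2 * R) := by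
        rw [mem_ball, dist_zero_right]
        linarith [norm_sub_norm_le (γ x) (γ 0)]
      rw [hσ, indicator_of_mem this]
  have common : ∀ (X Y : Set ℂ), X ⊆ bd H → extremalWidth {γ | γ ∈ curveFamily (Zd H)ᶜ X Y ∧
      ∀ t ∈ Icc (0:ℝ) 1, γ t ∈ ball (0:ℂ) (2 * R)} ≤ 1300 → widthIn (Zd H)ᶜ X Y < 1400 := by
    intro X Y hX hw
    obtain ⟨ρ, m, a, A⟩ := exists_metric_of_width_lt (hw.trans_lt (by norm_num : (1300:ℝ≥0∞) < 1310))
    have : widthIn (Zd H)ᶜ X Y ≤ area (fun z => max (ρ z) (σ z)) := by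
      refine width_le_area (m.max mσ) fun γ hγ => ?_
      by_cases hb : ∀ t ∈ Icc (0:ℝ) 1, γ t ∈ ball (0:ℂ) (2 * R)
      · exact (a γ ⟨hγ, hb⟩).trans (len_mono fun z => le_max_left _ _)
      · exact (esc γ hγ.1 (hX hγ.2.2.1) hb).trans (len_mono fun z => le_max_right _ _)
    refine this.trans_lt ((area_max_le m).trans_lt ?_)
    calc area ρ + area σ ≤ 1310 + 16 := add_le_add A.le Aσ
      _ < 1400 := by norm_num
  rcases key with hk | hk
  · obtain ⟨ρ, m, A, kk⟩ := killsOut_of_width (common _ _ (JD.arc_subset _ _) hk)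
    refine ⟨ρ, m, A, Or.inl fun γ s t α β c1 c2 c3 c4 c5 c6 => kk γ s t α β c1 c2 c3 c4 c5
      (Or.inl ⟨⟨α, c6.1, rfl⟩, ⟨β, c6.2, rfl⟩⟩)⟩
  · obtain ⟨ρ, m, A, kk⟩ := killsOut_of_width (common _ _ (JD.arc_subset _ _) hk)
    refine ⟨ρ, m, A, Or.inr fun γ s t α β c1 c2 c3 c4 c5 c6 => kk γ s t α β c1 c2 c3 c4 c5
      (Or.inl ⟨⟨α, c6.1, rfl⟩, ⟨β, c6.2, rfl⟩⟩)⟩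

lemma JD.bisect {H : ℂ → ℂ} (h : JD H) {x0 u v y0 : ℝ} (h1 : x0 ≤ u) (h2 : u < v)
    (h4 : v ≤ y0) (h5 : y0 ≤ x0 + 1 / 2) (j : ℕ) :
    ∃ (u' v' : ℝ) (ρ : ℂ → ℝ≥0∞), u ≤ u' ∧ u' < v' ∧ v' ≤ v ∧ v' - u' = (v - u) / 2 ^ j ∧
      Measurable ρ ∧ area ρ ≤ 1400 * j ∧
      KillsOut H ρ fun α β => α ∈ Icc x0 u' ∧ β ∈ Icc v' y0 ∧ ¬ (α ≤ u ∧ v ≤ β) := by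
  induction j with
  | zero =>
    refine ⟨u, v, fun _ => 0, le_rfl, h2, le_rfl, by simp, measurable_const, by simp [area], ?_⟩
    rintro γ s t α β - - - - - ⟨ha, hb, hn⟩
    exact absurd ⟨ha.2, hb.1⟩ hn
  | succ j ih =>
    obtain ⟨u', v', ρ, i1, i2, i3, i4, m, A, k⟩ := ih
    obtain ⟨ρ', m', A', k'⟩ := h.duality (x0 := x0) (u := u') (m := (u' + v') / 2) (v := v')
      (y0 := y0) (by linarith) (by linarith) (by linarith) (by linarith) h5
    have hA : area (fun z => max (ρ z) (ρ' z)) ≤ 1400 * ((j + 1 : ℕ) : ℝ≥0∞) := by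
      refine (area_max_le m).trans ?_
      push_cast; rw [mul_add, mul_one]; exact add_le_add A A'
    have K1 := k.mono (ρ' := fun z => max (ρ z) (ρ' z)) fun z => le_max_left _ _
    rcases k' with k' | k'
    · have K2 := k'.mono (ρ' := fun z => max (ρ z) (ρ' z)) fun z => le_max_right _ _
      refine ⟨u', (u' + v') / 2, _, i1, by linarith, by linarith, ?_, m.max m', hA, ?_⟩
      · rw [pow_succ, ← div_div, ← i4]; ring
      · rintro γ s t α β c1 c2 c3 c4 c5 ⟨ha, hb, hn⟩
        rcases le_total β v' with hv | hv
        · exact K2 γ s t α β c1 c2 c3 c4 c5 ⟨ha, hb.1, hv⟩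
        · exact K1 γ s t α β c1 c2 c3 c4 c5 ⟨ha, ⟨hv, hb.2⟩, hn⟩
    · have K2 := k'.mono (ρ' := fun z => max (ρ z) (ρ' z)) fun z => le_max_right _ _
      refine ⟨(u' + v') / 2, v', _, by linarith, by linarith, i3, ?_, m.max m', hA, ?_⟩
      · rw [pow_succ, ← div_div, ← i4]; ring
      · rintro γ s t α β c1 c2 c3 c4 c5 ⟨ha, hb, hn⟩
        rcases le_total u' α with hv | hv
        · exact K2 γ s t α β c1 c2 c3 c4 c5 ⟨⟨hv, ha.2⟩, hb⟩
        · exact K1 γ s t α β c1 c2 c3 c4 c5 ⟨⟨ha.1, hv⟩, hb, hn⟩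

/-- Outer hypothesis: each subarc of `[E, F]` is `M`-thin at scale `lam`. -/
def Thin (H : ℂ → ℂ) (lam E F : ℝ) (M : ℝ≥0∞) : Prop :=
  ∀ u v : ℝ, E ≤ u → u < v → v ≤ F → ∃ ρ : ℂ → ℝ≥0∞, Measurable ρ ∧ area ρ ≤ M ∧
    KillsOut H ρ (fun α β =>
      (α ∈ Icc u v ∧ lam * (v - u) / 2 < |β - (u + v) / 2| ∧ |β - (u + v) / 2| ≤ 1 / 2) ∨
      ((lam * (v - u) / 2 < |α - (u + v) / 2| ∧ |α - (u + v) / 2| ≤ 1 / 2) ∧ β ∈ Icc u v))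

lemma JD.inner_ball {H : ℂ → ℂ} (h : JD H) (c D : ℝ) (hD : 0 < D) :
    ∃ ρ : ℂ → ℝ≥0∞, Measurable ρ ∧ area ρ ≤ 60 ∧
      ∀ (γ : ℝ → ℂ) (s t α β : ℝ), CrvOn γ s t → s < t → (∀ x ∈ Ioo s t, γ x ∈ Zd H) →
        γ s = pt H α → γ t = pt H β → |α - β| ≤ 1 / 2 → D ≤ 2 * |α - β| →
        (|α - c| ≤ D ∨ |β - c| ≤ D) → 1 ≤ len ρ γ s t := by
  have hpi := Real.pi_pos
  obtain ⟨ρ, m, A, k⟩ := h.inner_metric (unitCirc c) (d := 2 * D) (R := (2 * Real.pi + 2) * D)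
    (by positivity) (by positivity)
  refine ⟨ρ, m, A.trans ?_, ?_⟩
  · rw [show (60:ℝ≥0∞) = ENNReal.ofReal 60 by simp]
    refine ENNReal.ofReal_le_ofReal ?_
    have : Real.pi * ((2 * Real.pi + 2) * D) ^ 2 / (2 * D) ^ 2 = Real.pi * (Real.pi + 1) ^ 2 := by
      field_simp
    rw [this]
    have h3 := Real.pi_lt_d2
    have : (Real.pi + 1) ^ 2 ≤ 4.15 ^ 2 := by gcongr; linarith
    nlinarith
  · intro γ s t α β hc hst hZ e1 e2 hab hD2 hor
    have hs : s ∈ Icc s t := ⟨le_rfl, hst.le⟩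
    have ht : t ∈ Icc s t := ⟨hst.le, le_rfl⟩
    have hcl : ∀ x ∈ Icc s t, γ x ∈ H '' closedBall 0 1 := by
      intro x hx
      rw [JD.closed_eq]
      rcases hx.1.eq_or_lt with g | g
      · right; rw [← g, e1]; exact JD.pt_mem α
      rcases hx.2.eq_or_lt with g' | g'
      · right; rw [g', e2]; exact JD.pt_mem β
      · exact Or.inl (hZ x ⟨g, g'⟩)
    have g1 : Ginv H (γ s) = unitCirc α := by rw [e1]; exact h.Ginv_left (unitCirc_memc α)
    have g2 : Ginv H (γ t) = unitCirc β := by rw [e2]; exact h.Ginv_left (unitCirc_memc β)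
    have hd := le_norm_unitCirc_sub hab
    rcases hor with ho | ho
    · refine k γ s t s t hc hZ hcl hs ht ?_ ?_
      · rw [g1, g2, norm_sub_rev]; linarith
      · rw [g1]; have := norm_unitCirc_sub_le α c
        nlinarith
    · refine k γ s t t s hc hZ hcl ht hs ?_ ?_
      · rw [g1, g2]; linarith
      · rw [g2]; have := norm_unitCirc_sub_le β c
        nlinarith

lemma JD.inner_scales {H : ℂ → ℂ} (h : JD H) (c n : ℝ) (hn : 0 < n) (K : ℕ) :
    ∃ ρ : ℂ → ℝ≥0∞, Measurable ρ ∧ area ρ ≤ 60 * (K + 1) ∧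
      ∀ (γ : ℝ → ℂ) (s t α β τ : ℝ), CrvOn γ s t → s < t → (∀ x ∈ Ioo s t, γ x ∈ Zd H) →
        γ s = pt H α → γ t = pt H β → |α - β| ≤ 1 / 2 → (τ = α ∨ τ = β) →
        |τ - c| ≤ |α - β| → n / 2 ≤ |α - β| → |τ - c| ≤ 2 ^ K * (n / 2) → 1 ≤ len ρ γ s t := by
  induction K with
  | zero =>
    obtain ⟨ρ, m, A, k⟩ := h.inner_ball c (n / 2) (by positivity)
    refine ⟨ρ, m, by simpa using A, ?_⟩
    intro γ s t α β τ c1 c2 c3 c4 c5 c6 c7 c8 c9 c10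
    refine k γ s t α β c1 c2 c3 c4 c5 c6 (by linarith) ?_
    simp only [pow_zero, one_mul] at c10
    rcases c7 with rfl | rfl
    · exact Or.inl c10
    · exact Or.inr c10
  | succ K ih =>
    obtain ⟨ρ, m, A, k⟩ := ih
    obtain ⟨ρ', m', A', k'⟩ := h.inner_ball c (2 ^ (K + 1) * (n / 2)) (by positivity)
    refine ⟨fun z => max (ρ z) (ρ' z), m.max m', ?_, ?_⟩
    · refine (area_max_le m).trans ((add_le_add A A').trans ?_)
      push_cast; exact le_of_eq (by ring)
    intro γ s t α β τ c1 c2 c3 c4 c5 c6 c7 c8 c9 c10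
    by_cases hs : |τ - c| ≤ 2 ^ K * (n / 2)
    · exact (k γ s t α β τ c1 c2 c3 c4 c5 c6 c7 c8 c9 hs).trans (len_mono fun z => le_max_left _ _)
    · refine (k' γ s t α β c1 c2 c3 c4 c5 c6 ?_ ?_).trans (len_mono fun z => le_max_right _ _)
      · push Not at hs; rw [pow_succ]; linarith
      · rcases c7 with rfl | rfl
        · exact Or.inl c10
        · exact Or.inr c10

/-- The bad jumps at a node. -/
def Bad (x0 e n1 n2 f y0 α β : ℝ) : Prop :=
  α ∈ Icc x0 y0 ∧ β ∈ Icc x0 y0 ∧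
    ((α < n1 ∧ n2 < β ∧ ¬ (α ≤ e ∧ f ≤ β)) ∨ (α ≤ e ∧ β ∈ Icc n1 n2) ∨ (α ∈ Icc n1 n2 ∧ f ≤ β))

set_option maxHeartbeats 800000 in
lemma JD.gap {H : ℂ → ℂ} (h : JD H) {lam E F : ℝ} {M : ℝ≥0∞} (hl : 2 < lam)
    (hT : Thin H lam E F M) {j : ℕ} (hj : lam ^ 3 ≤ 2 ^ j) {x0 e f y0 : ℝ} (hx : x0 ≤ e)
    (hef : e < f) (hy : f ≤ y0) (hxy : y0 ≤ x0 + 1 / 2) (hE : E ≤ e) (hF : f ≤ F) :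
    ∃ (n1 n2 : ℝ) (ρ : ℂ → ℝ≥0∞), e + (f - e) / lam ^ 2 ≤ n1 ∧ n1 < n2 ∧
      n2 ≤ f - (f - e) / lam ^ 2 ∧
      Measurable ρ ∧ area ρ ≤ 3 * M + 1700 * j ∧
      ∀ (γ : ℝ → ℂ) (s t α β : ℝ), CrvOn γ s t → s < t → (∀ x ∈ Ioo s t, γ x ∉ bd H) →
        γ s = pt H α → γ t = pt H β → Bad x0 e n1 n2 f y0 α β → 1 ≤ len ρ γ s t := by
  set q := f - e with hq
  have q0 : 0 < q := by linarith
  have l0 : 0 < lam := by linarith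
  set w := q / lam ^ 2 with hw
  have w0 : 0 < w := by positivity
  have w1 : w * lam ^ 2 = q := by rw [hw]; field_simp
  have l4 : 4 < lam ^ 2 := by nlinarith
  have w4 : 4 * w < q := by nlinarith
  have wl : 2 * (lam * w) < q := by nlinarith [mul_pos w0 l0]
  obtain ⟨n1, n2, ρb, i1, i2, i3, i4, mb, Ab, kb⟩ := h.bisect (x0 := x0) (u := e + w) (v := f - w)
    (y0 := y0) (by linarith) (by linarith) (by linarith) hxy j
  set n := n2 - n1 with hn
  have n0 : 0 < n := by linarith
  have p0 : (0:ℝ) < 2 ^ j := by positivity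
  have hn2 : n * 2 ^ j = f - w - (e + w) := by rw [i4]; field_simp
  have hnl : n * lam ≤ w := by
    have : n * lam ^ 3 ≤ w * lam ^ 2 := by
      calc n * lam ^ 3 ≤ n * 2 ^ j := by gcongr
        _ ≤ _ := by rw [hn2, w1]; linarith
    have : (n * lam) * lam ^ 2 ≤ w * lam ^ 2 := by nlinarith
    exact le_of_mul_le_mul_right this (by positivity)
  have hnw : 2 * n < w := by nlinarith
  have hj1 : (1:ℝ≥0∞) ≤ j := by
    rcases Nat.eq_zero_or_pos j with g | g
    · subst g; nlinarith
    · exact_mod_cast g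
  obtain ⟨ρ1, m1, A1, k1⟩ := hT e (e + w) hE (by linarith) (by linarith)
  obtain ⟨ρ2, m2, A2, k2⟩ := hT (f - w) f (by linarith) (by linarith) hF
  obtain ⟨ρ3, m3, A3, k3⟩ := hT n1 n2 (by linarith) i2 (by linarith)
  obtain ⟨ρi, mi, Ai, ki⟩ := h.inner_scales ((n1 + n2) / 2) n n0 (j + 2)
  refine ⟨n1, n2, fun z => max (ρb z) (max (ρi z) (max (ρ1 z) (max (ρ2 z) (ρ3 z)))), i1, i2, i3,
    mb.max (mi.max (m1.max (m2.max m3))), ?_, ?_⟩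
  · calc _ ≤ area ρb + (area ρi + (area ρ1 + (area ρ2 + area ρ3))) := by
          refine (area_max_le mb).trans (add_le_add_right ?_ _)
          refine (area_max_le mi).trans (add_le_add_right ?_ _)
          refine (area_max_le m1).trans (add_le_add_right ?_ _)
          exact area_max_le m2
      _ ≤ 1400 * j + (60 * (((j + 2 : ℕ) : ℝ≥0∞) + 1) + (M + (M + M))) := by gcongr
      _ = 3 * M + 1460 * j + 180 * 1 := by push_cast; ring
      _ ≤ 3 * M + 1460 * j + 180 * j := by gcongr
      _ = 3 * M + 1640 * j := by ring
      _ ≤ _ := by gcongr; norm_num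
  intro γ s t α β hc hst hno e1 e2 ⟨ha, hb, hbad⟩
  have hlt : α < β := by
    rcases hbad with g | g | g
    · linarith [g.1, g.2.1]
    · linarith [g.1, g.2.1]
    · linarith [g.1.2, g.2]
  have habs : |α - β| = β - α := by rw [abs_sub_comm, abs_of_pos]; linarith
  rcases h.dichotomy hc.1 hno with hZ | hZ
  · -- inner
    have key : ∃ τ, (τ = α ∨ τ = β) ∧ τ ∈ Icc e f ∧ |τ - (n1 + n2) / 2| ≤ |α - β| ∧
        n / 2 ≤ |α - β| := by
      rw [habs]
      rcases hbad with ⟨g1, g2, g3⟩ | ⟨g1, g2⟩ | ⟨g1, g2⟩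
      · by_cases hα : α ≤ e
        · have : β < f := by
            by_contra hcon; exact g3 ⟨hα, not_lt.1 hcon⟩
          refine ⟨β, Or.inr rfl, ⟨by linarith, this.le⟩, ?_, by linarith⟩
          rw [abs_of_pos] <;> linarith
        · push Not at hα
          refine ⟨α, Or.inl rfl, ⟨hα.le, by linarith⟩, ?_, by linarith⟩
          rw [abs_of_neg] <;> linarith
      · refine ⟨β, Or.inr rfl, ⟨by linarith [g2.1], by linarith [g2.2]⟩, ?_, by linarith [g2.1]⟩
        rw [abs_le]; constructor <;> linarith [g2.1, g2.2]
      · refine ⟨α, Or.inl rfl, ⟨by linarith [g1.1], by linarith [g1.2]⟩, ?_, by linarith [g1.2]⟩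
        rw [abs_le]; constructor <;> linarith [g1.1, g1.2]
    obtain ⟨τ, t1, t2, t3, t4⟩ := key
    have : |τ - (n1 + n2) / 2| ≤ 2 ^ (j + 2) * (n / 2) := by
      have : (2:ℝ) ^ (j + 2) * (n / 2) = 2 * (n * 2 ^ j) := by rw [pow_add]; ring
      rw [this, hn2, abs_le]
      constructor <;> linarith [t2.1, t2.2]
    refine (ki γ s t α β τ hc hst hZ e1 e2 ?_ t1 t3 t4 this).trans (len_mono fun z => ?_)
    · rw [habs]; linarith [ha.1, hb.2]
    · exact (le_max_left _ _).trans (le_max_right _ _)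
  · -- outer
    have hZ' : ∀ x ∈ Icc s t, γ x ∉ Zd H := by
      intro x hx
      rcases hx.1.eq_or_lt with g | g
      · rw [← g, e1]; exact h.bd_notMem (JD.pt_mem α)
      rcases hx.2.eq_or_lt with g' | g'
      · rw [g', e2]; exact h.bd_notMem (JD.pt_mem β)
      · exact hZ x ⟨g, g'⟩
    have K1 := k1.mono (ρ' := fun z => max (ρb z) (max (ρi z) (max (ρ1 z) (max (ρ2 z) (ρ3 z)))))
      fun z => by simp
    have K2 := k2.mono (ρ' := fun z => max (ρb z) (max (ρi z) (max (ρ1 z) (max (ρ2 z) (ρ3 z)))))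
      fun z => by simp
    have K3 := k3.mono (ρ' := fun z => max (ρb z) (max (ρi z) (max (ρ1 z) (max (ρ2 z) (ρ3 z)))))
      fun z => by simp
    have KB := kb.mono (ρ' := fun z => max (ρb z) (max (ρi z) (max (ρ1 z) (max (ρ2 z) (ρ3 z)))))
      fun z => by simp
    have r1 : lam * (e + w - e) = lam * w := by ring
    have r2 : lam * (f - (f - w)) = lam * w := by ring
    have r3 : lam * (n2 - n1) = n * lam := by rw [hn]; ring
    have a1 := ha.1; have a2 := ha.2; have b1 := hb.1; have b2 := hb.2
    rcases hbad with ⟨g1, g2, g3⟩ | ⟨g1, g2⟩ | ⟨g1, g2⟩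
    · by_cases hcase : α ≤ e + w ∧ f - w ≤ β
      · obtain ⟨hα1, hβ1⟩ := hcase
        by_cases hα : e < α
        · refine K1 γ s t α β hc hst hZ' e1 e2 (Or.inl ⟨⟨hα.le, hα1⟩, ?_, ?_⟩)
          · rw [abs_of_pos] <;> linarith
          · rw [abs_of_pos] <;> linarith
        · push Not at hα
          have hβ : β < f := by
            by_contra hcon; exact g3 ⟨hα, not_lt.1 hcon⟩
          refine K2 γ s t α β hc hst hZ' e1 e2 (Or.inr ⟨⟨?_, ?_⟩, ⟨hβ1, hβ.le⟩⟩)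
          · rw [abs_of_neg] <;> linarith
          · rw [abs_of_neg] <;> linarith
      · exact KB γ s t α β hc hst hZ' e1 e2 ⟨⟨a1, g1.le⟩, ⟨g2.le, b2⟩, hcase⟩
    · have g3 := g2.1; have g4 := g2.2
      refine K3 γ s t α β hc hst hZ' e1 e2 (Or.inr ⟨⟨?_, ?_⟩, g2⟩)
      · rw [abs_of_neg] <;> linarith
      · rw [abs_of_neg] <;> linarith
    · have g3 := g1.1; have g4 := g1.2
      refine K3 γ s t α β hc hst hZ' e1 e2 (Or.inl ⟨g1, ?_, ?_⟩)
      · rw [abs_of_pos] <;> linarith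
      · rw [abs_of_pos] <;> linarith

/-- A crossing of a node. -/
structure Cross (H : ℂ → ℂ) (γ : ℝ → ℂ) (t1 t2 x0 e f y0 : ℝ) : Prop where
  crv : CrvOn γ t1 t2
  lt : t1 < t2
  left : γ t1 ∈ arc H x0 e
  right : γ t2 ∈ arc H f y0
  mid : ∀ x ∈ Ioo t1 t2, γ x ∈ bd H → γ x ∈ pt H '' Ioo e f
  vis : ∃ x ∈ Ioo t1 t2, γ x ∈ bd H

lemma Cross.param {H : ℂ → ℂ} {γ : ℝ → ℂ} {t1 t2 x0 e f y0 : ℝ}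
    (hC : Cross H γ t1 t2 x0 e f y0) (hx : x0 ≤ e) (hef : e < f) (hy : f ≤ y0)
    {x : ℝ} (hx' : x ∈ Icc t1 t2) (hb : γ x ∈ bd H) :
    ∃ α ∈ Icc x0 y0, γ x = pt H α := by
  rcases hx'.1.eq_or_lt with g | g
  · obtain ⟨α, hα, he⟩ := hC.left
    exact ⟨α, ⟨hα.1, by linarith [hα.2]⟩, by rw [← g, he]⟩
  rcases hx'.2.eq_or_lt with g' | g'
  · obtain ⟨α, hα, he⟩ := hC.right
    exact ⟨α, ⟨by linarith [hα.1], hα.2⟩, by rw [g', he]⟩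
  · obtain ⟨α, hα, he⟩ := hC.mid x ⟨g, g'⟩ hb
    exact ⟨α, ⟨by linarith [hα.1], by linarith [hα.2]⟩, he.symm⟩

lemma JD.isCompact_visits {H : ℂ → ℂ} (h : JD H) {γ : ℝ → ℂ} {a b : ℝ}
    (hc : ContinuousOn γ (Icc a b)) (u v : ℝ) :
    IsCompact {x | x ∈ Icc a b ∧ γ x ∈ arc H u v} := by
  have : IsClosed (Icc a b ∩ γ ⁻¹' arc H u v) :=
    hc.preimage_isClosed_of_isClosed isClosed_Icc (h.isCompact_arc u v).isClosed
  exact isCompact_Icc.of_isClosed_subset this inter_subset_left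

lemma JD.no_forward {H : ℂ → ℂ} (h : JD H) {γ : ℝ → ℂ} {t1 t2 x0 e f y0 n1 n2 : ℝ}
    (hC : Cross H γ t1 t2 x0 e f y0) (hx : x0 ≤ e) (hy : f ≤ y0) (hxy : y0 ≤ x0 + 1 / 2)
    (h1 : e < n1) (h2 : n1 < n2) (h3 : n2 < f)
    (hNB : ∀ s t α β, s ∈ Icc t1 t2 → t ∈ Icc t1 t2 → s < t → (∀ x ∈ Ioo s t, γ x ∉ bd H) →
      γ s = pt H α → γ t = pt H β → ¬ Bad x0 e n1 n2 f y0 α β)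
    {a b : ℝ} (ha : t1 ≤ a) (hab : a ≤ b) (hb : b ≤ t2) (hA : γ a ∈ arc H x0 n1)
    (hB : γ b ∈ arc H n2 y0) (hN : ∀ x ∈ Icc a b, γ x ∉ arc H n1 n2) : False := by
  have hsub : ∀ {u v}, Icc u v ⊆ Icc t1 t2 → ContinuousOn γ (Icc u v) := fun g => hC.crv.1.mono g
  obtain ⟨s2, ⟨⟨hs2, hs2R⟩, hs2m⟩⟩ := (h.isCompact_visits (γ := γ) (a := a) (b := b)
    (hsub (Icc_subset_Icc ha hb)) n2 y0).exists_isLeast ⟨b, ⟨hab, le_rfl⟩, hB⟩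
  obtain ⟨s1, ⟨⟨hs1, hs1L⟩, hs1m⟩⟩ := (h.isCompact_visits (γ := γ) (a := a) (b := s2)
    (hsub (Icc_subset_Icc ha (hs2.2.trans hb))) x0 n1).exists_isGreatest ⟨a, ⟨le_rfl, hs2.1⟩, hA⟩
  have hne : s1 ≠ s2 := by
    rintro rfl
    exact disjoint_left.1 (h.disjoint_arc h2 (by linarith)) hs1L hs2R
  have hlt : s1 < s2 := lt_of_le_of_ne hs1.2 hne
  have m1 : s1 ∈ Icc t1 t2 := ⟨by linarith [hs1.1], by linarith [hs2.2]⟩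
  have m2 : s2 ∈ Icc t1 t2 := ⟨by linarith [hs2.1], by linarith [hs2.2]⟩
  have hno : ∀ x ∈ Ioo s1 s2, γ x ∉ bd H := by
    intro x hx' hbd
    have hxI : x ∈ Icc t1 t2 := ⟨by linarith [hx'.1, m1.1], by linarith [hx'.2, m2.2]⟩
    obtain ⟨τ, hτ, he⟩ := hC.param hx (by linarith) hy hxI hbd
    rcases le_total τ n1 with g | g
    · have := hs1m (show x ∈ {x | x ∈ Icc a s2 ∧ γ x ∈ arc H x0 n1} from
        ⟨⟨by linarith [hs1.1, hx'.1], hx'.2.le⟩, ⟨τ, ⟨hτ.1, g⟩, he.symm⟩⟩)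
      linarith [hx'.1]
    rcases le_total τ n2 with g' | g'
    · exact hN x ⟨by linarith [hs1.1, hx'.1], by linarith [hs2.2, hx'.2]⟩ ⟨τ, ⟨g, g'⟩, he.symm⟩
    · have := hs2m (show x ∈ {x | x ∈ Icc a b ∧ γ x ∈ arc H n2 y0} from
        ⟨⟨by linarith [hs1.1, hx'.1], by linarith [hs2.2, hx'.2]⟩, ⟨τ, ⟨g', hτ.2⟩, he.symm⟩⟩)
      linarith [hx'.2]
  obtain ⟨α, hα, eα⟩ := hs1L
  obtain ⟨β, hβ, eβ⟩ := hs2R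
  have hα' : α < n1 := by
    refine lt_of_le_of_ne hα.2 ?_
    rintro rfl
    exact hN s1 ⟨hs1.1, by linarith [hs2.2]⟩ ⟨α, ⟨le_rfl, h2.le⟩, eα⟩
  have hβ' : n2 < β := by
    refine lt_of_le_of_ne hβ.1 ?_
    rintro rfl
    exact hN s2 ⟨hs2.1, hs2.2⟩ ⟨n2, ⟨h2.le, le_rfl⟩, eβ⟩
  have nb := hNB s1 s2 α β m1 m2 hlt hno eα.symm eβ.symm
  have hcase : α ≤ e ∧ f ≤ β := by
    by_contra hcon
    exact nb ⟨⟨hα.1, by linarith⟩, ⟨by linarith, hβ.2⟩, Or.inl ⟨hα', hβ', hcon⟩⟩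
  have E1 : s1 = t1 := by
    rcases m1.1.eq_or_lt with g | g
    · exact g.symm
    · obtain ⟨τ, hτ, he⟩ := hC.mid s1 ⟨g, by linarith [m2.2]⟩ (by rw [← eα]; exact JD.pt_mem α)
      have := h.pt_inj (α := τ) (β := α) (by
        rw [abs_lt]; constructor <;> linarith [hτ.1, hτ.2, hα.1, hcase.1]) (he.trans eα.symm)
      linarith [hτ.1, hcase.1]
  have E2 : s2 = t2 := by
    rcases m2.2.eq_or_lt with g | g
    · exact g
    · obtain ⟨τ, hτ, he⟩ := hC.mid s2 ⟨by linarith [m1.1], g⟩ (by rw [← eβ]; exact JD.pt_mem β)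
      have := h.pt_inj (α := τ) (β := β) (by
        rw [abs_lt]; constructor <;> linarith [hτ.1, hτ.2, hβ.2, hcase.2]) (he.trans eβ.symm)
      linarith [hτ.2, hcase.2]
  obtain ⟨x, hx', hxb⟩ := hC.vis
  exact hno x (by rwa [E1, E2]) hxb

lemma JD.split {H : ℂ → ℂ} (h : JD H) {γ : ℝ → ℂ} {t1 t2 x0 e f y0 n1 n2 : ℝ}
    (hC : Cross H γ t1 t2 x0 e f y0) (hx : x0 ≤ e) (hy : f ≤ y0) (hxy : y0 ≤ x0 + 1 / 2)
    (h1 : e < n1) (h2 : n1 < n2) (h3 : n2 < f)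
    (hNB : ∀ s t α β, s ∈ Icc t1 t2 → t ∈ Icc t1 t2 → s < t → (∀ x ∈ Ioo s t, γ x ∉ bd H) →
      γ s = pt H α → γ t = pt H β → ¬ Bad x0 e n1 n2 f y0 α β) :
    ∃ u1 u2, t1 < u1 ∧ u1 ≤ u2 ∧ u2 < t2 ∧ Cross H γ t1 u1 x0 e n1 n2 ∧
      Cross H γ u2 t2 n1 n2 f y0 := by
  have hlt := hC.lt
  have hcomp := h.isCompact_visits hC.crv.1 n1 n2
  have hL : γ t1 ∈ arc H x0 n1 := image_mono (Icc_subset_Icc le_rfl h1.le) hC.left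
  have hR : γ t2 ∈ arc H n2 y0 := image_mono (Icc_subset_Icc h3.le le_rfl) hC.right
  have hne : {x | x ∈ Icc t1 t2 ∧ γ x ∈ arc H n1 n2}.Nonempty := by
    by_contra hcon
    refine h.no_forward hC hx hy hxy h1 h2 h3 hNB le_rfl hlt.le le_rfl hL hR fun x hx' hxN => ?_
    exact hcon ⟨x, hx', hxN⟩
  obtain ⟨u1, ⟨⟨hu1, hu1N⟩, hu1m⟩⟩ := hcomp.exists_isLeast hne
  obtain ⟨u2, ⟨⟨hu2, hu2N⟩, hu2m⟩⟩ := hcomp.exists_isGreatest hne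
  have d1 : t1 < u1 := by
    refine lt_of_le_of_ne hu1.1 ?_
    rintro rfl
    exact disjoint_left.1 (h.disjoint_arc h1 (by linarith)) hC.left hu1N
  have d2 : u2 < t2 := by
    refine lt_of_le_of_ne hu2.2 ?_
    rintro rfl
    exact disjoint_left.1 (h.disjoint_arc h3 (by linarith)) hu2N hC.right
  have d3 : u1 ≤ u2 := hu1m ⟨hu2, hu2N⟩
  refine ⟨u1, u2, d1, d3, d2, ⟨hC.crv.mono le_rfl (by linarith), d1, hC.left, hu1N, ?_, ?_⟩,
    ⟨hC.crv.mono (by linarith) le_rfl, d2, hu2N, hC.right, ?_, ?_⟩⟩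
  · intro x hx' hb
    obtain ⟨τ, hτ, he⟩ := hC.mid x ⟨hx'.1, by linarith [hx'.2]⟩ hb
    have hN : ∀ y ∈ Icc t1 x, γ y ∉ arc H n1 n2 := by
      intro y hy' hyN
      have := hu1m (show y ∈ {x | x ∈ Icc t1 t2 ∧ γ x ∈ arc H n1 n2} from
        ⟨⟨hy'.1, by linarith [hy'.2, hx'.2]⟩, hyN⟩)
      linarith [hy'.2, hx'.2]
    rcases lt_or_ge τ n1 with g | g
    · exact ⟨τ, ⟨hτ.1, g⟩, he⟩
    rcases le_or_gt τ n2 with g' | g'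
    · exact absurd ⟨τ, ⟨g, g'⟩, he⟩ (hN x ⟨hx'.1.le, le_rfl⟩)
    · exact (h.no_forward hC hx hy hxy h1 h2 h3 hNB le_rfl hx'.1.le (by linarith [hx'.2]) hL
        ⟨τ, ⟨g'.le, by linarith [hτ.2]⟩, he⟩ hN).elim
  · by_contra hcon
    push Not at hcon
    obtain ⟨α, hα, eα⟩ := hC.left
    obtain ⟨β, hβ, eβ⟩ := hu1N
    exact hNB t1 u1 α β ⟨le_rfl, hlt.le⟩ hu1 d1 hcon eα.symm eβ.symm
      ⟨⟨hα.1, by linarith [hα.2]⟩, ⟨by linarith [hβ.1], by linarith [hβ.2]⟩,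
        Or.inr (Or.inl ⟨hα.2, hβ⟩)⟩
  · intro x hx' hb
    obtain ⟨τ, hτ, he⟩ := hC.mid x ⟨by linarith [hx'.1], hx'.2⟩ hb
    have hN : ∀ y ∈ Icc x t2, γ y ∉ arc H n1 n2 := by
      intro y hy' hyN
      have := hu2m (show y ∈ {x | x ∈ Icc t1 t2 ∧ γ x ∈ arc H n1 n2} from
        ⟨⟨by linarith [hy'.1, hx'.1], hy'.2⟩, hyN⟩)
      linarith [hy'.1, hx'.1]
    rcases lt_or_ge n2 τ with g | g
    · exact ⟨τ, ⟨g, hτ.2⟩, he⟩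
    rcases le_or_gt n1 τ with g' | g'
    · exact absurd ⟨τ, ⟨g', g⟩, he⟩ (hN x ⟨le_rfl, hx'.2.le⟩)
    · exact (h.no_forward hC hx hy hxy h1 h2 h3 hNB (by linarith [hx'.1]) hx'.2.le le_rfl
        ⟨τ, ⟨by linarith [hτ.1], g'.le⟩, he⟩ hR hN).elim
  · by_contra hcon
    push Not at hcon
    obtain ⟨α, hα, eα⟩ := hu2N
    obtain ⟨β, hβ, eβ⟩ := hC.right
    exact hNB u2 t2 α β hu2 ⟨hlt.le, le_rfl⟩ d2 hcon eα.symm eβ.symm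
      ⟨⟨by linarith [hα.1], by linarith [hα.2]⟩, ⟨by linarith [hβ.1], hβ.2⟩,
        Or.inr (Or.inr ⟨hα, hβ.1⟩)⟩

lemma len_add_le (ρ : ℂ → ℝ≥0∞) (γ : ℝ → ℂ) {t1 u1 u2 t2 : ℝ} (h1 : t1 ≤ u1) (h2 : u1 ≤ u2)
    (h3 : u2 ≤ t2) : len ρ γ t1 u1 + len ρ γ u2 t2 ≤ len ρ γ t1 t2 := by
  unfold len
  rw [← lintegral_union measurableSet_Ioo]
  · refine lintegral_mono_set ?_
    rintro x (hx | hx)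
    · exact ⟨hx.1, by linarith [hx.2]⟩
    · exact ⟨by linarith [hx.1], hx.2⟩
  · exact disjoint_left.2 fun x hx hx' => by linarith [hx.2, hx'.1]

lemma len_mul_le (ρ : ℂ → ℝ≥0∞) (γ : ℝ → ℂ) (s t : ℝ) (k : ℝ≥0∞) :
    k * len ρ γ s t ≤ len (fun z => k * ρ z) γ s t := by
  have := len_comb_le (ρ := ρ) (ρ' := ρ) γ s t k 0
  simpa using this

lemma JD.tree {H : ℂ → ℂ} (h : JD H) {lam E F : ℝ} {M : ℝ≥0∞} (hl : 2 < lam)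
    (hT : Thin H lam E F M) {j : ℕ} (hj : lam ^ 3 ≤ 2 ^ j) {r η : ℝ} (hr : 0 < r)
    (hη : ∀ α β : ℝ, |α - β| ≤ η → ‖pt H α - pt H β‖ < r) (m : ℕ) :
    ∀ x0 e f y0 : ℝ, x0 ≤ e → e < f → f ≤ y0 → y0 ≤ x0 + 1 / 2 → E ≤ e → f ≤ F →
      (f - e) * (1 - 1 / lam ^ 2) ^ m ≤ η →
      ∃ ρ Λ : ℂ → ℝ≥0∞, Measurable ρ ∧ Measurable Λ ∧ area ρ ≤ 2 * (3 * M + 1700 * j) ∧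
        (∀ z, Λ z ≤ ENNReal.ofReal (1 / r)) ∧ ∫⁻ z, Λ z ≤ ENNReal.ofReal (16 * r) ∧
        ∀ (γ : ℝ → ℂ) (t1 t2 : ℝ), CrvOn γ 0 1 → 0 ≤ t1 → t2 ≤ 1 → 4 * r ≤ ‖γ 1 - γ 0‖ →
          Cross H γ t1 t2 x0 e f y0 → 1 ≤ len ρ γ t1 t2 + len Λ γ 0 1 := by
  induction m with
  | zero =>
    intro x0 e f y0 hx hef hy hxy hE hF hs
    simp only [pow_zero, mul_one] at hs
    refine ⟨fun _ => 0, (ball (pt H e) (2 * r)).indicator fun _ => ENNReal.ofReal (1 / r),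
      measurable_const, measurable_ballMetric _ _ _, by simp [area], ?_, ?_, ?_⟩
    · intro z; exact indicator_le_self' (fun _ _ => zero_le) z
    · rw [lintegral_indicator measurableSet_ball, lintegral_const, Measure.restrict_apply
        MeasurableSet.univ, univ_inter, Complex.volume_ball]
      have : (NNReal.pi : ℝ≥0∞) = ENNReal.ofReal Real.pi := by
        rw [← NNReal.coe_real_pi]; exact (ENNReal.ofReal_coe_nnreal).symm
      rw [this, ← ENNReal.ofReal_pow (by positivity),
        ← ENNReal.ofReal_mul (by positivity), ← ENNReal.ofReal_mul (by positivity)]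
      refine ENNReal.ofReal_le_ofReal ?_
      have : 1 / r * ((2 * r) ^ 2 * Real.pi) = 4 * Real.pi * r := by field_simp; norm_num
      rw [this]; nlinarith [Real.pi_le_four]
    · intro γ t1 t2 hc h0 h1 hfar hC
      obtain ⟨x, hx', hb⟩ := hC.vis
      obtain ⟨τ, hτ, he⟩ := hC.mid x hx' hb
      have hclose := hη τ e (by rw [abs_le]; constructor <;> linarith [hτ.1, hτ.2])
      rw [he] at hclose
      have hxI : x ∈ Icc (0:ℝ) 1 := ⟨by linarith [hx'.1], by linarith [hx'.2]⟩
      have hor : ∃ τ' ∈ Icc (0:ℝ) 1, r ≤ ‖γ τ' - γ x‖ := by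
        by_contra hcon
        push Not at hcon
        have a0 := hcon 0 ⟨le_rfl, zero_le_one⟩
        have a1 := hcon 1 ⟨zero_le_one, le_rfl⟩
        have := norm_sub_le_norm_sub_add_norm_sub (γ 1) (γ x) (γ 0)
        rw [norm_sub_rev (γ x)] at this
        linarith
      obtain ⟨τ', hτ', hd⟩ := hor
      have : (1 : ℝ≥0∞) = ENNReal.ofReal (1 / r) * ENNReal.ofReal r := by
        rw [← ENNReal.ofReal_mul (by positivity), one_div_mul_cancel hr.ne', ENNReal.ofReal_one]
      refine le_add_left ?_
      nth_rewrite 1 [this]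
      refine len_ball hc hxI hτ' hd fun y hy' hlt => ?_
      rw [indicator_of_mem]
      rw [mem_ball, dist_eq_norm]
      have := norm_sub_le_norm_sub_add_norm_sub (γ y) (γ x) (pt H e)
      linarith
  | succ m ih =>
    intro x0 e f y0 hx hef hy hxy hE hF hs
    obtain ⟨n1, n2, ρb, i1, i2, i3, mb, Ab, kb⟩ := h.gap hl hT hj hx hef hy hxy hE hF
    have l0 : 0 < lam := by linarith
    have w0 : 0 < (f - e) / lam ^ 2 := div_pos (by linarith) (by positivity)
    have hk : 0 ≤ 1 - 1 / lam ^ 2 := by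
      rw [sub_nonneg, div_le_one (by positivity)]; nlinarith
    have hk2 : (f - e) * (1 - 1 / lam ^ 2) = f - e - (f - e) / lam ^ 2 := by ring
    rw [pow_succ', ← mul_assoc, hk2] at hs
    have hp : 0 ≤ (1 - 1 / lam ^ 2) ^ m := by positivity
    obtain ⟨ρl, Λl, a1, a2, a3, a4, a5, a6⟩ := ih x0 e n1 n2 hx (by linarith) i2.le (by linarith)
      hE (by linarith) ((mul_le_mul_of_nonneg_right (by linarith) hp).trans hs)
    obtain ⟨ρr, Λr, b1, b2, b3, b4, b5, b6⟩ := ih n1 n2 f y0 i2.le (by linarith) hy (by linarith)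
      (by linarith) hF ((mul_le_mul_of_nonneg_right (by linarith) hp).trans hs)
    set B := 3 * M + 1700 * (j:ℝ≥0∞) with hB
    have hhalf : (2⁻¹ : ℝ≥0∞) + 2⁻¹ = 1 := ENNReal.inv_two_add_inv_two
    set ρ : ℂ → ℝ≥0∞ := fun z => max (ρb z) (max (2⁻¹ * ρl z) (2⁻¹ * ρr z)) with hρ
    refine ⟨ρ, fun z => 2⁻¹ * Λl z + 2⁻¹ * Λr z, mb.max ((a1.const_mul _).max (b1.const_mul _)),
      (a2.const_mul _).add (b2.const_mul _), ?_, ?_, ?_, ?_⟩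
    · calc area ρ ≤ area ρb + (area (fun z => 2⁻¹ * ρl z) + area (fun z => 2⁻¹ * ρr z)) :=
            (area_max_le mb).trans (add_le_add_right (area_max_le (a1.const_mul _)) _)
        _ ≤ B + (2⁻¹ ^ 2 * (2 * B) + 2⁻¹ ^ 2 * (2 * B)) := by
            rw [area_const_mul a1, area_const_mul b1]; gcongr
        _ = B + (2⁻¹ * 2) * ((2⁻¹ + 2⁻¹) * B) := by ring
        _ = 2 * B := by
            rw [hhalf, ENNReal.inv_mul_cancel (by norm_num) (by norm_num)]; ring
    · intro z
      calc 2⁻¹ * Λl z + 2⁻¹ * Λr z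
            ≤ 2⁻¹ * ENNReal.ofReal (1 / r) + 2⁻¹ * ENNReal.ofReal (1 / r) :=
            add_le_add (mul_le_mul_right (a4 z) _) (mul_le_mul_right (b4 z) _)
        _ = _ := by rw [← add_mul, hhalf, one_mul]
    · rw [lintegral_add_left (a2.const_mul _), lintegral_const_mul _ a2, lintegral_const_mul _ b2]
      calc _ ≤ 2⁻¹ * ENNReal.ofReal (16 * r) + 2⁻¹ * ENNReal.ofReal (16 * r) := by gcongr
        _ = _ := by rw [← add_mul, hhalf, one_mul]
    · intro γ t1 t2 hc h0 h1 hfar hC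
      by_cases hlen : 1 ≤ len ρb γ t1 t2
      · exact le_add_right (hlen.trans (len_mono fun z => le_max_left _ _))
      obtain ⟨u1, u2, d1, d2, d3, CL, CR⟩ := h.split hC hx hy hxy (n1 := n1) (n2 := n2)
        (by linarith) i2 (by linarith) (by
          intro s t α β hs' ht' hst hno e1 e2 hbad
          refine hlen ((kb γ s t α β (hC.crv.mono hs'.1 ht'.2) hst hno e1 e2 hbad).trans ?_)
          exact len_mono_interval hs'.1 ht'.2)
      have L := a6 γ t1 u1 hc h0 (by linarith) hfar CL
      have R := b6 γ u2 t2 hc (by linarith) h1 hfar CR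
      have e1 : 2⁻¹ * len ρl γ t1 u1 ≤ len ρ γ t1 u1 :=
        (len_mul_le _ _ _ _ _).trans (len_mono fun z =>
          (le_max_left _ _).trans (le_max_right _ _))
      have e2 : 2⁻¹ * len ρr γ u2 t2 ≤ len ρ γ u2 t2 :=
        (len_mul_le _ _ _ _ _).trans (len_mono fun z =>
          (le_max_right _ _).trans (le_max_right _ _))
      have e3 := len_add_le ρ γ d1.le d2 d3.le
      have e4 := len_comb_le (ρ := Λl) (ρ' := Λr) γ 0 1 2⁻¹ 2⁻¹
      calc (1:ℝ≥0∞) = 2⁻¹ * 1 + 2⁻¹ * 1 := by rw [mul_one, hhalf]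
        _ ≤ 2⁻¹ * (len ρl γ t1 u1 + len Λl γ 0 1) + 2⁻¹ * (len ρr γ u2 t2 + len Λr γ 0 1) := by
            gcongr
        _ = (2⁻¹ * len ρl γ t1 u1 + 2⁻¹ * len ρr γ u2 t2) +
              (2⁻¹ * len Λl γ 0 1 + 2⁻¹ * len Λr γ 0 1) := by ring
        _ ≤ (len ρ γ t1 u1 + len ρ γ u2 t2) + len (fun z => 2⁻¹ * Λl z + 2⁻¹ * Λr z) γ 0 1 := by
            gcongr
        _ ≤ _ := add_le_add_left e3 _

lemma area_le_of_bound {Λ : ℂ → ℝ≥0∞} {r : ℝ} (hr : 0 < r) (hm : Measurable Λ)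
    (h1 : ∀ z, Λ z ≤ ENNReal.ofReal (1 / r)) (h2 : ∫⁻ z, Λ z ≤ ENNReal.ofReal (16 * r)) :
    area Λ ≤ 16 := by
  calc area Λ ≤ ∫⁻ z, ENNReal.ofReal (1 / r) * Λ z := by
        refine lintegral_mono fun z => ?_
        simp only [sq]
        exact mul_le_mul_left (h1 z) _
    _ = ENNReal.ofReal (1 / r) * ∫⁻ z, Λ z := lintegral_const_mul _ hm
    _ ≤ ENNReal.ofReal (1 / r) * ENNReal.ofReal (16 * r) := mul_le_mul_right h2 _
    _ = 16 := by
        rw [← ENNReal.ofReal_mul (by positivity)]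
        rw [show 1 / r * (16 * r) = 16 by field_simp]; simp

lemma area_add_le {ρ ρ' : ℂ → ℝ≥0∞} (h : Measurable ρ) (h' : Measurable ρ') :
    area (fun z => 1 * ρ z + 1 * ρ' z) ≤ 2 * area ρ + 2 * area ρ' := by
  unfold area
  rw [← lintegral_const_mul _ (h.pow_const 2), ← lintegral_const_mul _ (h'.pow_const 2),
    ← lintegral_add_left ((h.pow_const 2).const_mul _)]
  refine lintegral_mono fun z => ?_
  simp only [one_mul]
  exact ennreal_sq_add_le _ _

lemma JD.unif {H : ℂ → ℂ} (h : JD H) {r : ℝ} (hr : 0 < r) :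
    ∃ η > 0, ∀ α β : ℝ, |α - β| ≤ η → ‖pt H α - pt H β‖ < r := by
  have hu := (isCompact_closedBall (0:ℂ) 1).uniformContinuousOn_of_continuous h.contOn
  rw [Metric.uniformContinuousOn_iff] at hu
  obtain ⟨δ, hδ, hd⟩ := hu r hr
  have hpi := Real.pi_pos
  refine ⟨δ / (4 * Real.pi), by positivity, fun α β hab => ?_⟩
  have := hd _ (unitCirc_memc α) _ (unitCirc_memc β) (by
    rw [dist_eq_norm]
    refine (norm_unitCirc_sub_le α β).trans_lt ?_
    calc 2 * Real.pi * |α - β| ≤ 2 * Real.pi * (δ / (4 * Real.pi)) := by gcongr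
      _ = δ / 2 := by field_simp; norm_num
      _ < δ := by linarith)
  rwa [dist_eq_norm] at this

lemma JD.width_cross {H : ℂ → ℂ} (h : JD H) {lam e f x0 y0 : ℝ} {M : ℝ≥0∞} (hl : 2 < lam)
    (hT : Thin H lam e f M) {j : ℕ} (hj : lam ^ 3 ≤ 2 ^ j)
    (hx : x0 ≤ e) (hef : e < f) (hy : f ≤ y0) (hxy : y0 ≤ x0 + 1 / 2) :
    extremalWidth {γ | Cross H γ 0 1 x0 e f y0} ≤ 12 * M + 7000 * j := by
  obtain ⟨δ, hδ, sep⟩ := exists_sep (h.isCompact_arc x0 e) (h.isCompact_arc f y0)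
    (h.disjoint_arc hef (by linarith))
  have hr : 0 < δ / 4 := by positivity
  obtain ⟨η, hη, hu⟩ := h.unif hr
  have l0 : 0 < lam := by linarith
  have hk0 : 0 < 1 / lam ^ 2 := by positivity
  obtain ⟨m, hm⟩ := exists_pow_lt_of_lt_one (x := η / (f - e)) (y := 1 - 1 / lam ^ 2)
    (div_pos hη (by linarith)) (by linarith)
  have hm' : (f - e) * (1 - 1 / lam ^ 2) ^ m ≤ η := by
    rw [lt_div_iff₀ (by linarith)] at hm; linarith
  obtain ⟨ρ, Λ, a1, a2, a3, a4, a5, a6⟩ := h.tree hl hT hj hr hu m x0 e f y0 hx hef hy hxy le_rfl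
    le_rfl hm'
  have hj1 : (1:ℝ≥0∞) ≤ j := by
    rcases Nat.eq_zero_or_pos j with g | g
    · subst g; nlinarith [pow_pos l0 2]
    · exact_mod_cast g
  calc extremalWidth {γ | Cross H γ 0 1 x0 e f y0} ≤ area (fun z => 1 * ρ z + 1 * Λ z) := by
        refine width_le_area ((a1.const_mul 1).add (a2.const_mul 1)) fun γ hγ => ?_
        have := a6 γ 0 1 hγ.crv le_rfl le_rfl (by linarith [sep _ hγ.left _ hγ.right]) hγ
        refine this.trans ?_
        have := len_comb_le (ρ := ρ) (ρ' := Λ) γ 0 1 1 1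
        rwa [one_mul, one_mul] at this
    _ ≤ 2 * area ρ + 2 * area Λ := area_add_le a1 a2
    _ ≤ 2 * (2 * (3 * M + 1700 * j)) + 2 * 16 := by
        gcongr; exact area_le_of_bound hr a2 a4 a5
    _ = 12 * M + 6800 * j + 32 * 1 := by ring
    _ ≤ 12 * M + 6800 * j + 32 * j := by gcongr
    _ = 12 * M + 6832 * j := by ring
    _ ≤ 12 * M + 7000 * j := by gcongr; norm_num

lemma siegel_open (θ : ℝ) : IsOpen (siegelDisk θ) := isOpen_interior.connectedComponentIn

lemma SiegelData.Zd_eq {θ : ℝ} (S : SiegelData θ) : Zd S.H = siegelDisk θ := S.image_ball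

lemma SiegelData.jd {θ : ℝ} (S : SiegelData θ) : JD S.H :=
  ⟨S.contOn, S.injOn, S.holo, by rw [S.image_ball]; exact siegel_open θ⟩

lemma SiegelData.bd_eq {θ : ℝ} (S : SiegelData θ) : bdryZ θ = bd S.H := by
  unfold bdryZ
  rw [← S.image_closedBall, ← S.Zd_eq, JD.closed_eq]
  ext z
  constructor
  · rintro ⟨h1 | h1, h2⟩
    · exact absurd h1 h2
    · exact h1
  · intro hz
    exact ⟨Or.inr hz, S.jd.bd_notMem hz⟩

lemma SiegelData.arc_eq {θ : ℝ} (S : SiegelData θ) (u v : ℝ) :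
    S.H '' (unitCirc '' Icc u v) = arc S.H u v := by
  rw [image_image]; rfl

lemma SiegelData.thin {θ : ℝ} (S : SiegelData θ) {lam E F : ℝ} {M : ℝ≥0∞} (hl : 2 < lam)
    (hM : ∀ c' r' : ℝ, 0 < r' → E ≤ c' - r' → c' + r' ≤ F → wPlusLam θ S lam c' r' < M) :
    Thin S.H lam E F M := by
  intro u v hu huv hv
  have hw := hM ((u + v) / 2) ((v - u) / 2) (by linarith) (by linarith) (by linarith)
  unfold wPlusLam at hw
  rw [← S.Zd_eq] at hw
  obtain ⟨ρ, m, A, k⟩ := killsOut_of_width hw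
  have hX : ∀ α ∈ Icc u v, pt S.H α ∈ cArc θ S ((u + v) / 2) ((v - u) / 2) := by
    intro α hα
    unfold cArc
    rw [S.arc_eq]
    exact ⟨α, ⟨by linarith [hα.1], by linarith [hα.2]⟩, rfl⟩
  have hY : ∀ β, lam * (v - u) / 2 < |β - (u + v) / 2| → |β - (u + v) / 2| ≤ 1 / 2 →
      pt S.H β ∈ closure (bdryZ θ \ cArc θ S ((u + v) / 2)
        (min (lam * (2 * ((v - u) / 2))) 1 / 2)) := by
    intro β h1 h2
    refine subset_closure ⟨by rw [S.bd_eq]; exact JD.pt_mem β, ?_⟩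
    have : min (lam * (2 * ((v - u) / 2))) 1 / 2 = lam * (v - u) / 2 := by
      rw [min_eq_left]
      · ring
      · have : lam * (2 * ((v - u) / 2)) = lam * (v - u) := by ring
        linarith
    rw [this]
    unfold cArc
    obtain ⟨g1, g2⟩ := abs_le.1 h2
    rw [S.arc_eq, S.jd.mem_arc_iff (by linarith) (by linarith)]
    rintro ⟨k1, k2⟩
    have : |β - (u + v) / 2| ≤ lam * (v - u) / 2 := by
      rw [abs_le]; constructor <;> linarith
    linarith
  refine ⟨ρ, m, A, fun γ s t α β c1 c2 c3 c4 c5 c6 => k γ s t α β c1 c2 c3 c4 c5 ?_⟩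
  rcases c6 with ⟨g1, g2, g3⟩ | ⟨⟨g1, g2⟩, g3⟩
  · exact Or.inl ⟨hX α g1, hY β g2 g3⟩
  · exact Or.inr ⟨hY α g1 g2, hX β g3⟩

lemma SiegelData.circ_subset {θ : ℝ} (S : SiegelData θ) {x0 e f y0 : ℝ} (hx : x0 ≤ e)
    (hef : e < f) (hy : f ≤ y0) :
    circFam θ (arc S.H x0 e) (arc S.H e f) (arc S.H f y0) ⊆
      curveFamily (siegelDisk θ)ᶜ (arc S.H x0 e) (arc S.H f y0) ∪
        {γ | Cross S.H γ 0 1 x0 e f y0} := by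
  rintro γ ⟨hc, h0, h1, ⟨ε, hε, hout⟩, -, hav⟩
  by_cases hvis : ∃ x ∈ Ioo (0:ℝ) 1, γ x ∈ bd S.H
  · right
    refine ⟨hc, zero_lt_one, h0, h1, ?_, hvis⟩
    intro x hx' hb
    have hn := hav x hx'
    have hn1 : γ x ∉ arc S.H x0 e := fun g => hn (Or.inl (Or.inl g))
    have hn2 : γ x ∉ arc S.H f y0 := fun g => hn (Or.inl (Or.inr g))
    have hn3 : γ x ∈ arc S.H e f := by
      by_contra hcon
      refine hn (Or.inr ⟨by rw [S.bd_eq]; exact hb, ?_⟩)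
      rintro ((g | g) | g)
      · exact hn1 g
      · exact hcon g
      · exact hn2 g
    obtain ⟨τ, hτ, he⟩ := hn3
    refine ⟨τ, ⟨lt_of_le_of_ne hτ.1 ?_, lt_of_le_of_ne hτ.2 ?_⟩, he⟩
    · rintro rfl
      exact hn1 ⟨e, ⟨hx, le_rfl⟩, he⟩
    · rintro rfl
      exact hn2 ⟨τ, ⟨le_rfl, hy⟩, he⟩
  · left
    push Not at hvis
    have houtZ : ∀ x ∈ Ioo (0:ℝ) 1, γ x ∉ Zd S.H := by
      rcases S.jd.dichotomy hc.1 hvis with hZ | hZ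
      · exfalso
        have p : 0 < min (ε / 2) (1 / 2) := by positivity
        have p1 : min (ε / 2) (1 / 2) < ε := (min_le_left _ _).trans_lt (by linarith)
        have p2 : min (ε / 2) (1 / 2) < 1 := (min_le_right _ _).trans_lt (by norm_num)
        refine hout _ ⟨p, p1⟩ ?_
        rw [← S.Zd_eq]
        exact hZ _ ⟨p, p2⟩
      · exact hZ
    refine ⟨hc, fun t ht => ?_, h0, h1⟩
    rw [← S.Zd_eq]
    rcases ht.1.eq_or_lt with g | g
    · rw [← g]; exact S.jd.bd_notMem (JD.arc_subset _ _ h0)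
    rcases ht.2.eq_or_lt with g' | g'
    · rw [g']; exact S.jd.bd_notMem (JD.arc_subset _ _ h1)
    · exact houtZ t ⟨g, g'⟩

lemma JD.finite_width {H : ℂ → ℂ} (h : JD H) {x0 e f y0 : ℝ} (hef : e < f)
    (hxy : y0 < x0 + 1) {Fam : Set (ℝ → ℂ)}
    (hF : ∀ γ ∈ Fam, IsCurve γ ∧ γ 0 ∈ arc H x0 e ∧ γ 1 ∈ arc H f y0) :
    extremalWidth Fam ≠ ∞ := by
  obtain ⟨δ, hδ, sep⟩ := exists_sep (h.isCompact_arc x0 e) (h.isCompact_arc f y0)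
    (h.disjoint_arc hef (by linarith))
  obtain ⟨R, hR0, hR⟩ : ∃ R : ℝ, 0 < R ∧ bd H ⊆ ball 0 R :=
    h.isCompact_bd.isBounded.subset_ball_lt 0 0
  set σ : ℂ → ℝ≥0∞ := (ball (0:ℂ) (R + δ)).indicator fun _ => ENNReal.ofReal (1 / δ) with hσ
  have hle : extremalWidth Fam ≤ area σ := by
    refine width_le_area (measurable_ballMetric _ _ _) fun γ hγ => ?_
    obtain ⟨hc, h0, h1⟩ := hF γ hγ
    have : (1 : ℝ≥0∞) = ENNReal.ofReal (1 / δ) * ENNReal.ofReal δ := by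
      rw [← ENNReal.ofReal_mul (by positivity), one_div_mul_cancel hδ.ne', ENNReal.ofReal_one]
    rw [this]
    refine len_ball hc ⟨le_rfl, zero_le_one⟩ ⟨zero_le_one, le_rfl⟩ (sep _ h0 _ h1)
      fun x hx hlt => ?_
    have g0 := hR (JD.arc_subset _ _ h0)
    rw [mem_ball, dist_zero_right] at g0
    rw [hσ, indicator_of_mem]
    rw [mem_ball, dist_zero_right]
    linarith [norm_sub_norm_le (γ x) (γ 0)]
  refine (hle.trans_lt ?_).ne
  rw [hσ, area_indicator measurableSet_ball]
  exact ENNReal.mul_lt_top (by simp) measure_ball_lt_top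

theorem trading_into_outer_width :
    ∃ C c : ℝ, 0 < C ∧ 0 < c ∧
      ∀ lam : ℝ, 2 < lam →
        ∀ θ : ℝ, BoundedType θ →
          ∀ (S : SiegelData θ) (s a l b : ℝ),
            0 < a → 0 < l → 0 < b → a + l + b ≤ 1 / 2 →
            ∀ K : ℝ≥0∞,
              K = circWidth θ (arcOn θ S s (s + a)) (arcOn θ S (s + a) (s + a + l))
                    (arcOn θ S (s + a + l) (s + a + l + b))
                  - wPlus θ (arcOn θ S s (s + a)) (arcOn θ S (s + a + l) (s + a + l + b)) →
              ENNReal.ofReal (C * Real.log lam) ≤ K →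
              ∃ c' r' : ℝ, 0 < r' ∧ s + a ≤ c' - r' ∧ c' + r' ≤ s + a + l ∧
                ENNReal.ofReal c * K ≤ wPlusLam θ S lam c' r' := by
  refine ⟨168000, 1 / 48, by norm_num, by norm_num, ?_⟩
  intro lam hl θ _ S s a l b ha hl0 hb hsum K hK hKlog
  by_contra hcon
  push Not at hcon
  have hT := S.thin hl hcon
  have hlog2 : 0.69 < Real.log 2 := by have := Real.log_two_gt_d9; linarith
  have hlog : Real.log 2 < Real.log lam := Real.log_lt_log (by norm_num) hl
  set j := ⌈3 * Real.log lam / Real.log 2⌉₊ with hjdef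
  have hj1 : 3 * Real.log lam / Real.log 2 ≤ j := Nat.le_ceil _
  have hj2 : (j:ℝ) < 3 * Real.log lam / Real.log 2 + 1 :=
    Nat.ceil_lt_add_one (div_nonneg (by linarith) (by linarith))
  have hj : lam ^ 3 ≤ 2 ^ j := by
    have l0 : 0 < lam := by linarith
    rw [← Real.log_le_log_iff (by positivity) (by positivity), Real.log_pow, Real.log_pow]
    rw [div_le_iff₀ (by linarith)] at hj1
    exact_mod_cast hj1
  have hj3 : (j:ℝ) ≤ 6 * Real.log lam := by
    have e1 : 3 * Real.log lam / Real.log 2 ≤ 4.4 * Real.log lam := by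
      rw [div_le_iff₀ (by linarith)]; nlinarith
    linarith
  have hx : s ≤ s + a := by linarith
  have hef : s + a < s + a + l := by linarith
  have hy : s + a + l ≤ s + a + l + b := by linarith
  have hW := S.jd.width_cross (x0 := s) (y0 := s + a + l + b) hl hT hj hx hef hy (by linarith)
  have hsub := S.circ_subset hx hef hy
  have hfin : K ≠ ∞ := by
    have := S.jd.finite_width (x0 := s) (e := s + a) (f := s + a + l) (y0 := s + a + l + b) hef
      (by linarith) (Fam := circFam θ (arc S.H s (s + a)) (arc S.H (s + a) (s + a + l))
        (arc S.H (s + a + l) (s + a + l + b))) fun γ hγ => ⟨hγ.1, hγ.2.1, hγ.2.2.1⟩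
    rw [hK]
    unfold arcOn circWidth
    simp only [S.arc_eq]
    exact ENNReal.sub_ne_top this
  have hKle : K ≤ 12 * (ENNReal.ofReal (1 / 48) * K) + 7000 * j := by
    rw [hK] at hW ⊢
    refine le_trans ?_ hW
    unfold arcOn circWidth wPlus widthIn
    simp only [S.arc_eq]
    rw [tsub_le_iff_left]
    exact (width_mono hsub).trans (width_union_le _ _)
  lift K to ℝ≥0 using hfin
  have hKlog' : 168000 * Real.log lam ≤ (K:ℝ) := by
    rw [← ENNReal.ofReal_coe_nnreal, ENNReal.ofReal_le_ofReal_iff K.coe_nonneg] at hKlog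
    exact hKlog
  have hKle' : (K:ℝ) ≤ 12 * (1 / 48 * K) + 7000 * j := by
    have e1 : (12 * (ENNReal.ofReal (1 / 48) * K) + 7000 * j : ℝ≥0∞) =
        ENNReal.ofReal (12 * (1 / 48 * K) + 7000 * j) := by
      rw [ENNReal.ofReal_add (by positivity) (by positivity), ENNReal.ofReal_mul (by norm_num),
        ENNReal.ofReal_mul (by norm_num), ENNReal.ofReal_mul (by norm_num),
        ENNReal.ofReal_coe_nnreal, ENNReal.ofReal_natCast]
      simp
    rw [e1, ← ENNReal.ofReal_coe_nnreal, ENNReal.ofReal_le_ofReal_iff (by positivity)] at hKle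
    exact hKle
  linarith
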